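/- Let d ≥ 3 be a fixed integer. There exists 𝔟₀ > 0 such that for every 𝔟 ≥ 𝔟₀ there exist constants C, c, N > 0 with the following property: for all n ≥ N with nd even and all primes p with gcd(p,d) = 1 and p ≤ c·n^{(d−2)/(5d−6)}, let ℳ be the set of p×p symmetric matrices M = [m_{ij}]_{0≤i,j≤p−1} with nonnegative integer entries, every diagonal entry even, total sum Σ_{i,j} m_{ij} = dn, each row sum divisible by d with n_i(M) := (Σ_j m_{ij})/d and n_0(M) < n, and Σ_{j} j·m_{ij} ≡ 0 (mod p) for every i; and let 𝒩_𝔟 = {M ∈ ℳ : Σ_{i,j=0}^{p−1} (m_{ij}/(dn) − 1/p²)² > 𝔟·(ln n)/n}. Then (2^{nd/2}(nd/2)!/(nd)!) · Σ_{M ∈ 𝒩_𝔟} (n!/∏_{i=0}^{p−1} n_i(M)!) · (∏_{0≤i<j≤p−1} m_{ij}!) · (∏_{i=0}^{p−1} m_{ii}!/(2^{m_{ii}/2}(m_{ii}/2)!)) · ∏_{i=0}^{p−1} #{(a¹,…,a^{n_i(M)}) ∈ (Z_{d,p})^{n_i(M)} : Σ_k Φ(aᵏ) = (m_{i0},…,m_{i,p−1})}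 ≤ C·p^{2d}/n^{d−2}. -/

import Mathlib

open Finset

/-- The counting map `Φ` : the `j`-th coordinate of `Φ(a)` is `#{r : a r = j}`. -/
def Phi {d p : ℕ} (a : Fin d → ZMod p) (j : ZMod p) : ℕ :=
  (Finset.univ.filter (fun r : Fin d => a r = j)).card

namespace LDP

variable {p : ℕ} [Fact p.Prime]

/-- squared distance of `f` to its reflection. -/
noncomputable def Aref (f : ZMod p → ℝ) (σ : ZMod p) : ℝ := ∑ a, (f a - f (-σ - a)) ^ 2

/-- squared distance of `f` to its translation. -/
noncomputable def Btr (f : ZMod p → ℝ) (τ : ZMod p) : ℝ := ∑ a, (f a - f (a + τ)) ^ 2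

/-- the deficit functional. -/
noncomputable def eta (k : ℕ) (q : ZMod p → ℝ) : ℝ :=
  ∑ b : Fin (k + 1) → ZMod p, (∏ s, q (b s)) * Aref (fun a => √(q a)) (∑ s, b s)

lemma Aref_nonneg (f : ZMod p → ℝ) (σ : ZMod p) : 0 ≤ Aref f σ :=
  Finset.sum_nonneg fun _ _ => sq_nonneg _

lemma Btr_nonneg (f : ZMod p → ℝ) (σ : ZMod p) : 0 ≤ Btr f σ :=
  Finset.sum_nonneg fun _ _ => sq_nonneg _

lemma eta_nonneg (k : ℕ) (q : ZMod p → ℝ) (hq : ∀ a, 0 ≤ q a) : 0 ≤ eta k q :=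
  Finset.sum_nonneg fun _ _ => mul_nonneg (Finset.prod_nonneg fun _ _ => hq _) (Aref_nonneg _ _)

lemma Btr_le_Aref (f : ZMod p → ℝ) (σ σ' : ZMod p) :
    Btr f (σ - σ') ≤ 2 * Aref f σ + 2 * Aref f σ' := by
  have h2 : Aref f σ' = ∑ a, (f (-σ - a) - f (a + (σ - σ'))) ^ 2 := by
    unfold Aref
    rw [← Equiv.sum_comp (Equiv.subLeft (-σ))]
    refine Finset.sum_congr rfl fun a _ => ?_
    simp only [Equiv.subLeft_apply]
    congr 3
    ring
  rw [h2]
  unfold Aref Btr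
  rw [Finset.mul_sum, Finset.mul_sum, ← Finset.sum_add_distrib]
  refine Finset.sum_le_sum fun a _ => ?_
  nlinarith [sq_nonneg ((f a - f (-σ - a)) - (f (-σ - a) - f (a + (σ - σ'))))]

lemma sum_prod_one (k : ℕ) (q : ZMod p → ℝ) (h1 : ∑ a, q a = 1) :
    ∑ b : Fin k → ZMod p, ∏ s, q (b s) = 1 := by
  rw [← Fintype.sum_pow, h1, one_pow]

lemma pair_le_eta (k : ℕ) (q : ZMod p → ℝ) (hq : ∀ a, 0 ≤ q a) (h1 : ∑ a, q a = 1) :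
    ∑ c, ∑ c', q c * q c' * Btr (fun a => √(q a)) (c - c') ≤ 4 * eta k q := by
  set f : ZMod p → ℝ := fun a => √(q a) with hf
  have he : eta k q = ∑ b : Fin k → ZMod p, (∏ s, q (b s)) *
      ∑ c, q c * Aref f (c + ∑ s, b s) := by
    unfold eta
    rw [← (Fin.consEquiv (fun _ : Fin (k+1) => ZMod p)).sum_comp, Fintype.sum_prod_type,
      Finset.sum_comm]
    refine Finset.sum_congr rfl fun b _ => ?_
    rw [Finset.mul_sum]
    refine Finset.sum_congr rfl fun c _ => ?_
    simp [Fin.consEquiv, Fin.prod_univ_succ, Fin.sum_univ_succ]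
    ring
  have key : ∀ σ : ZMod p, ∑ c, ∑ c', q c * q c' * Btr f (c - c') ≤
      4 * ∑ c, q c * Aref f (c + σ) := by
    intro σ
    calc ∑ c, ∑ c', q c * q c' * Btr f (c - c')
        ≤ ∑ c, ∑ c', q c * q c' * (2 * Aref f (c + σ) + 2 * Aref f (c' + σ)) := by
          refine Finset.sum_le_sum fun c _ => Finset.sum_le_sum fun c' _ => ?_
          refine mul_le_mul_of_nonneg_left ?_ (mul_nonneg (hq _) (hq _))
          have := Btr_le_Aref f (c + σ) (c' + σ)
          rwa [add_sub_add_right_eq_sub] at this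
      _ = 4 * ∑ c, q c * Aref f (c + σ) := by
          have e1 : ∀ c c', q c * q c' * (2 * Aref f (c + σ) + 2 * Aref f (c' + σ)) =
            (2 * (q c * Aref f (c + σ))) * q c' + q c * (2 * (q c' * Aref f (c' + σ))) := by
            intros; ring
          simp_rw [e1, Finset.sum_add_distrib, ← Finset.mul_sum, ← Finset.sum_mul, h1,
            ← Finset.mul_sum]
          ring
  rw [he]
  calc ∑ c, ∑ c', q c * q c' * Btr f (c - c')
      = ∑ b : Fin k → ZMod p, (∏ s, q (b s)) * ∑ c, ∑ c', q c * q c' * Btr f (c - c') := by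
        rw [← Finset.sum_mul, sum_prod_one k q h1, one_mul]
    _ ≤ ∑ b : Fin k → ZMod p, (∏ s, q (b s)) * (4 * ∑ c, q c * Aref f (c + ∑ s, b s)) :=
        Finset.sum_le_sum fun b _ => mul_le_mul_of_nonneg_left (key _)
          (Finset.prod_nonneg fun _ _ => hq _)
    _ = _ := by
        rw [Finset.mul_sum]
        exact Finset.sum_congr rfl fun b _ => by ring

/-- sum of all translation distances -/
lemma sum_Btr (f : ZMod p → ℝ) (h1 : ∑ a, f a ^ 2 = 1) :
    ∑ τ, Btr f τ = 2 * p - 2 * (∑ a, f a) ^ 2 := by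
  unfold Btr
  rw [Finset.sum_comm]
  have : ∀ a, ∑ τ, (f a - f (a + τ)) ^ 2 = p * f a ^ 2 + 1 - 2 * f a * ∑ b, f b := by
    intro a
    have hc : ∑ τ, (f a - f (a + τ)) ^ 2 = ∑ x, (f a - f x) ^ 2 :=
      Equiv.sum_comp (Equiv.addLeft a) (fun x => (f a - f x) ^ 2)
    rw [hc]
    simp_rw [sub_sq, Finset.sum_add_distrib, Finset.sum_sub_distrib, ← Finset.mul_sum, h1]
    simp [ZMod.card]
    ring
  simp_rw [this, Finset.sum_sub_distrib, Finset.sum_add_distrib, ← Finset.mul_sum, h1,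
    ← Finset.sum_mul, ← Finset.mul_sum]
  simp [ZMod.card]
  ring

lemma Btr_mul (f : ZMod p → ℝ) (τ : ZMod p) (m : ℕ) :
    Btr f (m * τ) ≤ m ^ 2 * Btr f τ := by
  have h : ∀ a, (f a - f (a + m * τ)) ^ 2 ≤
      m * ∑ l ∈ range m, (f (a + l * τ) - f (a + (l + 1 : ℕ) * τ)) ^ 2 := by
    intro a
    have := Finset.sum_range_sub' (fun l : ℕ => f (a + l * τ)) m
    have h2 := sq_sum_le_card_mul_sum_sq (s := range m)
      (f := fun l : ℕ => f (a + l * τ) - f (a + (l + 1 : ℕ) * τ))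
    rw [this] at h2
    simpa using h2
  unfold Btr
  calc ∑ a, (f a - f (a + m * τ)) ^ 2
      ≤ ∑ a, m * ∑ l ∈ range m, (f (a + l * τ) - f (a + (l + 1 : ℕ) * τ)) ^ 2 :=
        Finset.sum_le_sum fun a _ => h a
    _ = m * ∑ l ∈ range m, ∑ a, (f (a + l * τ) - f (a + (l + 1 : ℕ) * τ)) ^ 2 := by
        rw [← Finset.mul_sum, Finset.sum_comm]
    _ = m * ∑ l ∈ range m, ∑ a, (f a - f (a + τ)) ^ 2 := by
        congr 1
        refine Finset.sum_congr rfl fun l _ => ?_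
        rw [← Equiv.sum_comp (Equiv.addRight ((l : ZMod p) * τ)) (fun a => (f a - f (a + τ)) ^ 2)]
        refine Finset.sum_congr rfl fun a _ => ?_
        simp only [Equiv.coe_addRight]
        congr 3
        push_cast; ring
    _ = _ := by simp; ring

lemma Btr_le_all (f : ZMod p → ℝ) (τ σ : ZMod p) (hτ : τ ≠ 0) :
    Btr f σ ≤ p ^ 2 * Btr f τ := by
  have h := Btr_mul f τ (σ / τ).val
  have e : (((σ / τ).val : ℕ) : ZMod p) * τ = σ := by
    rw [ZMod.natCast_zmod_val, div_mul_cancel₀ _ hτ]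
  rw [e] at h
  refine h.trans (mul_le_mul_of_nonneg_right ?_ (Btr_nonneg _ _))
  have : ((σ / τ).val : ℝ) ≤ p := by exact_mod_cast (ZMod.val_lt _).le
  gcongr



/-- squared Hellinger distance to uniform -/
noncomputable def Hu (q : ZMod p → ℝ) : ℝ := ∑ a, (√(q a) - 1 / √(p : ℝ)) ^ 2

lemma Hu_nonneg (q : ZMod p → ℝ) : 0 ≤ Hu q := Finset.sum_nonneg fun _ _ => sq_nonneg _

lemma p_pos' : (0 : ℝ) < p := by exact_mod_cast (Fact.out : p.Prime).pos

lemma Hu_eq (q : ZMod p → ℝ) (hq : ∀ a, 0 ≤ q a) (h1 : ∑ a, q a = 1) :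
    Hu q = 2 - 2 * (∑ a, √(q a)) / √(p : ℝ) := by
  have hp : (0 : ℝ) < p := p_pos'
  unfold Hu
  simp_rw [sub_sq, Real.sq_sqrt (hq _), Finset.sum_add_distrib, Finset.sum_sub_distrib, h1,
    ← Finset.sum_mul, ← Finset.mul_sum]
  simp only [div_pow, Real.sq_sqrt hp.le, sum_const, card_univ, ZMod.card, nsmul_eq_mul]
  field_simp
  ring

lemma sum_Btr_ge (q : ZMod p → ℝ) (hq : ∀ a, 0 ≤ q a) (h1 : ∑ a, q a = 1) :
    p * Hu q ≤ ∑ τ, Btr (fun a => √(q a)) τ := by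
  have hp : (0 : ℝ) < p := p_pos'
  rw [sum_Btr _ (by simp_rw [Real.sq_sqrt (hq _), h1]), Hu_eq q hq h1]
  set S := ∑ a, √(q a) with hS
  have hS0 : 0 ≤ S := Finset.sum_nonneg fun _ _ => Real.sqrt_nonneg _
  have hS1 : S ^ 2 ≤ p := by
    have := sq_sum_le_card_mul_sum_sq (s := (univ : Finset (ZMod p))) (f := fun a => √(q a))
    simpa [Real.sq_sqrt (hq _), h1, ZMod.card] using this
  set r := √(p : ℝ) with hr
  have hr0 : 0 < r := Real.sqrt_pos.mpr hp
  have hr2 : (p : ℝ) = r ^ 2 := (Real.sq_sqrt hp.le).symm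
  have hle : S ≤ r := Real.le_sqrt_of_sq_le hS1
  rw [hr2]
  have : r ^ 2 * (2 - 2 * S / r) = 2 * r ^ 2 - 2 * S * r := by field_simp
  rw [this]
  nlinarith

lemma sum_pair (g : ZMod p → ℝ) (v : ZMod p → ℝ) :
    ∑ c, ∑ c', v c * g (c - c') = (∑ c, v c) * ∑ τ, g τ := by
  rw [Finset.sum_mul]
  refine Finset.sum_congr rfl fun c _ => ?_
  rw [← Finset.mul_sum]
  congr 1
  exact Equiv.sum_comp (Equiv.subLeft c) g

lemma sum_pair' (g : ZMod p → ℝ) (v : ZMod p → ℝ) :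
    ∑ c, ∑ c', v c' * g (c - c') = (∑ c, v c) * ∑ τ, g τ := by
  rw [Finset.sum_comm, Finset.sum_mul]
  refine Finset.sum_congr rfl fun c _ => ?_
  rw [← Finset.mul_sum]
  congr 1
  exact Equiv.sum_comp (Equiv.subRight c) g

lemma near_uniform (k : ℕ) (q : ZMod p → ℝ) (hq : ∀ a, 0 ≤ q a) (h1 : ∑ a, q a = 1)
    (hH : Hu q ≤ 1 / 64) : Hu q / 32 ≤ eta k q := by
  have hp : (0 : ℝ) < p := p_pos'
  have h4 := pair_le_eta k q hq h1
  set r := √(p : ℝ) with hr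
  have hr0 : 0 < r := Real.sqrt_pos.mpr hp
  have hr2 : (p : ℝ) = r ^ 2 := (Real.sq_sqrt hp.le).symm
  set v : ZMod p → ℝ := fun a => (√(q a) - 1 / r) ^ 2 with hv
  have hv0 : ∀ a, 0 ≤ v a := fun a => sq_nonneg _
  have bad : ∀ c, q c < 1 / (2 * p) → 1 ≤ 16 * p * v c := by
    intro c hc
    have h0 := Real.sqrt_nonneg (q c)
    have h2 := Real.sq_sqrt (hq c)
    set f := √(q c) with hf
    have hrf : (r * f) ^ 2 < 1 / 2 := by
      rw [mul_pow, h2, ← hr2]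
      rw [lt_div_iff₀ (by positivity)] at hc
      linarith
    have hrf2 : r * f < 3 / 4 := by
      by_contra hcon
      push Not at hcon
      nlinarith
    have : 16 * (p : ℝ) * v c = 16 * (1 - r * f) ^ 2 := by
      simp only [hv, ← hf]
      rw [hr2]; field_simp; ring
    rw [this]
    nlinarith
  have pt : ∀ c c', 1 / (4 * p ^ 2) * (1 - 16 * p * v c - 16 * p * v c') ≤ q c * q c' := by
    intro c c'
    have hvc := hv0 c
    have hvc' := hv0 c'
    have e1 : 0 ≤ 16 * (p : ℝ) * v c := by positivity
    have e2 : 0 ≤ 16 * (p : ℝ) * v c' := by positivity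
    by_cases hc : q c < 1 / (2 * p)
    · have := bad c hc
      refine le_trans ?_ (mul_nonneg (hq c) (hq c'))
      refine mul_nonpos_of_nonneg_of_nonpos (by positivity) (by linarith)
    · by_cases hc' : q c' < 1 / (2 * p)
      · have := bad c' hc'
        refine le_trans ?_ (mul_nonneg (hq c) (hq c'))
        refine mul_nonpos_of_nonneg_of_nonpos (by positivity) (by linarith)
      · push Not at hc hc'
        calc 1 / (4 * (p : ℝ) ^ 2) * (1 - 16 * p * v c - 16 * p * v c')
            ≤ 1 / (4 * (p : ℝ) ^ 2) * 1 :=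
              mul_le_mul_of_nonneg_left (by linarith) (by positivity)
          _ = (1 / (2 * p)) * (1 / (2 * p)) := by field_simp; norm_num
          _ ≤ q c * q c' := mul_le_mul hc hc' (by positivity) (hq c)
  set g := Btr (fun a => √(q a)) with hg
  have hS := sum_Btr_ge q hq h1
  have hHv : ∑ a, v a = Hu q := rfl
  have h5 : 1 / (4 * (p : ℝ)) * (1 - 32 * Hu q) * ∑ τ, g τ ≤ ∑ c, ∑ c', q c * q c' * g (c - c') := by
    calc 1 / (4 * (p : ℝ)) * (1 - 32 * Hu q) * ∑ τ, g τ
        = ∑ c, ∑ c', 1 / (4 * (p : ℝ) ^ 2) * (1 - 16 * p * v c - 16 * p * v c') * g (c - c') := by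
          have e : ∀ c c', 1 / (4 * (p : ℝ) ^ 2) * (1 - 16 * p * v c - 16 * p * v c') * g (c - c') =
            1 / (4 * (p : ℝ) ^ 2) * ((1 : ℝ) * g (c - c')) - 4 / p * (v c * g (c - c'))
              - 4 / p * (v c' * g (c - c')) := by
            intro c c'; field_simp; ring
          have e1 := sum_pair g (fun _ => 1)
          have e2 := sum_pair g v
          have e3 := sum_pair' g v
          rw [hHv] at e2 e3
          calc _ = 1 / (4 * (p : ℝ) ^ 2) * (∑ c : ZMod p, ∑ c', (1 : ℝ) * g (c - c'))
                - 4 / p * (∑ c, ∑ c', v c * g (c - c'))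
                - 4 / p * (∑ c, ∑ c', v c' * g (c - c')) := ?_
            _ = _ := by
                simp only [e, Finset.sum_sub_distrib, Finset.mul_sum]
          rw [e1, e2, e3]
          simp only [sum_const, card_univ, ZMod.card, nsmul_eq_mul]
          field_simp
          ring
      _ ≤ _ := Finset.sum_le_sum fun c _ => Finset.sum_le_sum fun c' _ =>
          mul_le_mul_of_nonneg_right (pt c c') (Btr_nonneg _ _)
  have h6 : 1 / (4 * (p : ℝ)) * (1 - 32 * Hu q) * (p * Hu q) ≤
      1 / (4 * (p : ℝ)) * (1 - 32 * Hu q) * ∑ τ, g τ :=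
    mul_le_mul_of_nonneg_left hS (mul_nonneg (by positivity) (by linarith))
  have h7 : 1 / (4 * (p : ℝ)) * (1 - 32 * Hu q) * (p * Hu q) = 1 / 4 * (1 - 32 * Hu q) * Hu q := by
    field_simp
  have := Hu_nonneg q
  nlinarith

lemma gap (k : ℕ) (q : ZMod p → ℝ) (hq : ∀ a, 0 ≤ q a) (h1 : ∑ a, q a = 1)
    (hmax : ∀ a, q a ≤ 24 / 25) : Hu q / 100 ≤ p ^ 2 * eta k q := by
  have hp : (0 : ℝ) < p := p_pos'
  have h4 := pair_le_eta k q hq h1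
  set g := Btr (fun a => √(q a)) with hg
  have hB : ∀ τ ≠ 0, Hu q / p ^ 2 ≤ g τ := by
    intro τ hτ
    have : ∑ σ, g σ ≤ ∑ σ : ZMod p, (p : ℝ) ^ 2 * g τ :=
      Finset.sum_le_sum fun σ _ => Btr_le_all _ τ σ hτ
    have h2 := (sum_Btr_ge q hq h1).trans this
    simp only [sum_const, card_univ, ZMod.card, nsmul_eq_mul] at h2
    have h3 := le_of_mul_le_mul_left h2 hp
    rw [div_le_iff₀ (by positivity)]
    linarith
  have h5 : ∀ c c', q c * q c' * (Hu q / p ^ 2) - (if c = c' then q c * q c' * (Hu q / p ^ 2) else 0)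
      ≤ q c * q c' * g (c - c') := by
    intro c c'
    split_ifs with h
    · simp only [sub_self]
      exact mul_nonneg (mul_nonneg (hq _) (hq _)) (Btr_nonneg _ _)
    · rw [sub_zero]
      exact mul_le_mul_of_nonneg_left (hB _ (sub_ne_zero.mpr h)) (mul_nonneg (hq _) (hq _))
  have h6 := Finset.sum_le_sum fun c (_ : c ∈ univ) => Finset.sum_le_sum fun c' (_ : c' ∈ univ) => h5 c c'
  simp_rw [Finset.sum_sub_distrib, Finset.sum_ite_eq, mem_univ, if_true, ← Finset.sum_mul,
    ← Finset.mul_sum, h1, mul_one, h1] at h6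
  have h7 : ∑ c, q c * q c ≤ 24 / 25 := by
    calc ∑ c, q c * q c ≤ ∑ c, q c * (24 / 25) :=
          Finset.sum_le_sum fun c _ => mul_le_mul_of_nonneg_left (hmax c) (hq c)
      _ = _ := by rw [← Finset.sum_mul, h1, one_mul]
  have h8 : 0 ≤ Hu q / p ^ 2 := div_nonneg (Hu_nonneg q) (by positivity)
  have h9 : 1 / 25 * (Hu q / p ^ 2) ≤ 4 * eta k q := by nlinarith
  have h10 : Hu q = p ^ 2 * (Hu q / p ^ 2) := by field_simp
  rw [h10]
  have : (0 : ℝ) < p ^ 2 := by positivity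
  nlinarith

lemma sqrt_gap {x y : ℝ} (hx : 24 / 25 ≤ x) (hy : y ≤ 1 / 25) : 1 / 2 ≤ (√x - √y) ^ 2 := by
  have h1 : (19 / 20 : ℝ) ≤ √x := Real.le_sqrt_of_sq_le (by linarith)
  have h2 : √y ≤ 1 / 5 := Real.sqrt_le_iff.mpr ⟨by norm_num, by linarith⟩
  nlinarith

lemma other_small (q : ZMod p → ℝ) (hq : ∀ a, 0 ≤ q a) (h1 : ∑ a, q a = 1) {i j : ZMod p}
    (hij : i ≠ j) (hi : 24 / 25 ≤ q i) : q j ≤ 1 / 25 := by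
  have : q i + q j ≤ 1 := by
    rw [← h1, ← Finset.sum_pair hij]
    exact Finset.sum_le_sum_of_subset_of_nonneg (subset_univ _) fun _ _ _ => hq _
  linarith

lemma near_zero (k : ℕ) (q : ZMod p → ℝ) (hq : ∀ a, 0 ≤ q a) (h1 : ∑ a, q a = 1)
    (h0 : 24 / 25 ≤ q 0) : (1 - q 0) / 10 ≤ eta k q := by
  have h4 := pair_le_eta k q hq h1
  set g := Btr (fun a => √(q a)) with hg
  have hB : ∀ τ ≠ 0, 1 / 2 ≤ g τ := by
    intro τ hτ
    have := Finset.single_le_sum (f := fun a => (√(q a) - √(q (a + τ))) ^ 2)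
      (fun _ _ => sq_nonneg _) (mem_univ 0)
    refine le_trans ?_ this
    simp only [zero_add]
    exact sqrt_gap h0 (other_small q hq h1 hτ.symm h0)
  have h5 : ∑ c, q c * q 0 * g (c - 0) ≤ ∑ c, ∑ c', q c * q c' * g (c - c') :=
    Finset.sum_le_sum fun c _ => Finset.single_le_sum (f := fun c' => q c * q c' * g (c - c'))
      (fun _ _ => mul_nonneg (mul_nonneg (hq _) (hq _)) (Btr_nonneg _ _)) (mem_univ 0)
  have h6 : ∀ c, q c * (12 / 25) - (if c = 0 then q c * (12 / 25) else 0) ≤ q c * q 0 * g (c - 0) := by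
    intro c
    split_ifs with h
    · simp only [sub_self]
      exact mul_nonneg (mul_nonneg (hq _) (hq _)) (Btr_nonneg _ _)
    · have := hB c h
      rw [sub_zero, sub_zero, mul_assoc]
      exact mul_le_mul_of_nonneg_left (by nlinarith) (hq c)
  have h7 := Finset.sum_le_sum fun c (_ : c ∈ univ) => h6 c
  rw [Finset.sum_sub_distrib, ← Finset.sum_mul, h1, Finset.sum_ite_eq'] at h7
  simp only [mem_univ, if_true] at h7
  have : q 0 ≤ 1 := by
    rw [← h1]; exact Finset.single_le_sum (f := q) (fun _ _ => hq _) (mem_univ 0)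
  linarith

lemma near_delta (k : ℕ) (hpk : ¬ p ∣ k + 3) (q : ZMod p → ℝ) (hq : ∀ a, 0 ≤ q a)
    (h1 : ∑ a, q a = 1) (j : ZMod p) (hj : j ≠ 0) (h0 : 24 / 25 ≤ q j) :
    (24 / 25) ^ (k + 1) / 2 ≤ eta k q := by
  have h := Finset.single_le_sum (f := fun b : Fin (k + 1) → ZMod p =>
    (∏ s, q (b s)) * Aref (fun a => √(q a)) (∑ s, b s))
    (fun _ _ => mul_nonneg (Finset.prod_nonneg fun _ _ => hq _) (Aref_nonneg _ _))
    (mem_univ (fun _ => j))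
  refine le_trans ?_ h
  simp only [prod_const, card_univ, Fintype.card_fin, sum_const, nsmul_eq_mul]
  rw [div_eq_mul_inv]
  have h2 := Finset.single_le_sum (f := fun a => (√(q a) - √(q (-(((k + 1 : ℕ) : ZMod p) * j) - a))) ^ 2)
      (fun _ _ => sq_nonneg _) (mem_univ j)
  have hne : j ≠ -(((k + 1 : ℕ) : ZMod p) * j) - j := by
    intro h
    have : ((k + 3 : ℕ) : ZMod p) * j = 0 := by
      push_cast at h ⊢
      linear_combination h
    rcases mul_eq_zero.mp this with h | h
    · exact hpk ((ZMod.natCast_eq_zero_iff _ _).mp h)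
    · exact hj h
  have h3 := sqrt_gap h0 (other_small q hq h1 hne h0)
  have h4 : (2 : ℝ)⁻¹ ≤ Aref (fun a => √(q a)) (((k + 1 : ℕ) : ZMod p) * j) := by
    refine le_trans ?_ h2
    rw [← one_div]
    exact h3
  exact mul_le_mul (pow_le_pow_left₀ (by norm_num) h0 _) h4 (by norm_num) (pow_nonneg (hq _) _)

/-- the trichotomy for a probability vector -/
lemma trichotomy (k : ℕ) : ∃ c : ℝ, 0 < c ∧ ∀ (p : ℕ) [Fact p.Prime], ¬ p ∣ k + 3 →
    ∀ q : ZMod p → ℝ, (∀ a, 0 ≤ q a) → ∑ a, q a = 1 →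
      c ≤ p ^ 2 * eta k q ∨ c * (1 - q 0) ≤ eta k q ∨ c * Hu q ≤ eta k q := by
  refine ⟨min (1 / 6400) ((24 / 25) ^ (k + 1) / 2), by positivity, ?_⟩
  intro p _ hpk q hq h1
  have hc : min (1 / 6400 : ℝ) ((24 / 25) ^ (k + 1) / 2) ≤ 1 / 6400 := min_le_left _ _
  set c := min (1 / 6400 : ℝ) ((24 / 25) ^ (k + 1) / 2) with hcd
  have hp1 : (1 : ℝ) ≤ p := by exact_mod_cast (Fact.out : p.Prime).one_le
  by_cases hm : ∀ a, q a ≤ 24 / 25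
  · by_cases hH : Hu q ≤ 1 / 64
    · right; right
      have := near_uniform k q hq h1 hH
      have := Hu_nonneg q
      nlinarith
    · left
      have := gap k q hq h1 hm
      push Not at hH
      linarith
  · push Not at hm
    obtain ⟨j, hj⟩ := hm
    by_cases h0 : j = 0
    · subst h0
      right; left
      have := near_zero k q hq h1 hj.le
      have : q 0 ≤ 1 := by
        rw [← h1]; exact Finset.single_le_sum (f := q) (fun _ _ => hq _) (mem_univ 0)
      nlinarith
    · left
      have h2 := near_delta k hpk q hq h1 j h0 hj.le
      have h3 : c ≤ eta k q := (min_le_right _ _).trans h2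
      have h4 := eta_nonneg k q hq
      nlinarith [one_le_pow₀ hp1 (n := 2)]


/-- squared Hellinger distance -/
noncomputable def He (q r : ZMod p → ℝ) : ℝ := ∑ a, (√(q a) - √(r a)) ^ 2

lemma He_nonneg (q r : ZMod p → ℝ) : 0 ≤ He q r := Finset.sum_nonneg fun _ _ => sq_nonneg _

lemma He_eq (q r : ZMod p → ℝ) (hq : ∀ a, 0 ≤ q a) (h1 : ∑ a, q a = 1)
    (hr : ∀ a, 0 ≤ r a) (hr1 : ∑ a, r a = 1) :
    He q r = 2 - 2 * ∑ a, √(q a) * √(r a) := by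
  unfold He
  simp_rw [sub_sq, Real.sq_sqrt (hq _), Real.sq_sqrt (hr _), Finset.sum_add_distrib,
    Finset.sum_sub_distrib, h1, hr1, mul_assoc, ← Finset.mul_sum]
  ring

lemma He_prod (m : ℕ) (q r : ZMod p → ℝ) (hq : ∀ a, 0 ≤ q a) (h1 : ∑ a, q a = 1)
    (hr : ∀ a, 0 ≤ r a) (hr1 : ∑ a, r a = 1) :
    ∑ b : Fin m → ZMod p, (√(∏ s, q (b s)) - √(∏ s, r (b s))) ^ 2 ≤ m * He q r := by
  have hq' : ∀ b : Fin m → ZMod p, 0 ≤ ∏ s, q (b s) := fun b => Finset.prod_nonneg fun _ _ => hq _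
  have hr' : ∀ b : Fin m → ZMod p, 0 ≤ ∏ s, r (b s) := fun b => Finset.prod_nonneg fun _ _ => hr _
  have hc : ∀ b : Fin m → ZMod p, √(∏ s, q (b s)) * √(∏ s, r (b s)) =
      ∏ s, (√(q (b s)) * √(r (b s))) := by
    intro b
    rw [Finset.prod_mul_distrib, Real.sqrt_prod _ (fun _ _ => hq _),
      Real.sqrt_prod _ (fun _ _ => hr _)]
  simp_rw [sub_sq, Real.sq_sqrt (hq' _), Real.sq_sqrt (hr' _), Finset.sum_add_distrib,
    Finset.sum_sub_distrib, sum_prod_one m q h1, sum_prod_one m r hr1, mul_assoc, hc,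
    ← Finset.mul_sum]
  have e := Fintype.sum_pow (fun a => √(q a) * √(r a)) m
  rw [← e]
  have hh := He_eq q r hq h1 hr hr1
  set x := ∑ a, √(q a) * √(r a) with hx
  have hx0 : 0 ≤ x := Finset.sum_nonneg fun _ _ => by positivity
  have hb := one_add_mul_le_pow (a := x - 1) (by linarith) m
  rw [add_sub_cancel] at hb
  rw [hh]
  nlinarith

lemma Aref_compare (f g : ZMod p → ℝ) (σ : ZMod p) :
    Aref f σ ≤ 3 * Aref g σ + 6 * ∑ a, (g a - f a) ^ 2 := by
  have e : ∑ a, (g (-σ - a) - f (-σ - a)) ^ 2 = ∑ a, (g a - f a) ^ 2 :=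
    Equiv.sum_comp (Equiv.subLeft (-σ)) (fun a => (g a - f a) ^ 2)
  have : 3 * Aref g σ + 6 * ∑ a, (g a - f a) ^ 2 = ∑ a, (3 * (g a - g (-σ - a)) ^ 2 +
      3 * (g a - f a) ^ 2 + 3 * (g (-σ - a) - f (-σ - a)) ^ 2) := by
    simp_rw [Finset.sum_add_distrib, ← Finset.mul_sum, e]
    unfold Aref
    ring
  rw [this]
  unfold Aref
  refine Finset.sum_le_sum fun a _ => ?_
  nlinarith [sq_nonneg ((g a - g (-σ - a)) + (g a - f a)), sq_nonneg ((g a - g (-σ - a)) -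
    (g (-σ - a) - f (-σ - a))), sq_nonneg ((g a - f a) + (g (-σ - a) - f (-σ - a)))]

lemma Aref_le_four (q : ZMod p → ℝ) (hq : ∀ a, 0 ≤ q a) (h1 : ∑ a, q a = 1) (σ : ZMod p) :
    Aref (fun a => √(q a)) σ ≤ 4 := by
  have e : ∑ a, q (-σ - a) = ∑ a, q a := Equiv.sum_comp (Equiv.subLeft (-σ)) q
  unfold Aref
  calc ∑ a, (√(q a) - √(q (-σ - a))) ^ 2 ≤ ∑ a, (2 * q a + 2 * q (-σ - a)) := by
        refine Finset.sum_le_sum fun a _ => ?_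
        nlinarith [Real.sq_sqrt (hq a), Real.sq_sqrt (hq (-σ - a)),
          sq_nonneg (√(q a) + √(q (-σ - a)))]
    _ = 4 := by rw [Finset.sum_add_distrib, ← Finset.mul_sum, ← Finset.mul_sum, e, h1]; norm_num

lemma eta_compare (k : ℕ) (q r : ZMod p → ℝ) (hq : ∀ a, 0 ≤ q a) (h1 : ∑ a, q a = 1)
    (hr : ∀ a, 0 ≤ r a) (hr1 : ∑ a, r a = 1) :
    eta k r ≤ 6 * eta k q + (12 + 8 * (k + 1)) * He q r := by
  have hq' : ∀ b : Fin (k + 1) → ZMod p, 0 ≤ ∏ s, q (b s) :=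
    fun b => Finset.prod_nonneg fun _ _ => hq _
  have hr' : ∀ b : Fin (k + 1) → ZMod p, 0 ≤ ∏ s, r (b s) :=
    fun b => Finset.prod_nonneg fun _ _ => hr _
  have hp := He_prod (k + 1) q r hq h1 hr hr1
  have h2 : ∀ b : Fin (k + 1) → ZMod p, (∏ s, r (b s)) * Aref (fun a => √(r a)) (∑ s, b s) ≤
      6 * ((∏ s, q (b s)) * Aref (fun a => √(q a)) (∑ s, b s)) + 12 * He q r * ∏ s, q (b s) +
      8 * (√(∏ s, q (b s)) - √(∏ s, r (b s))) ^ 2 := by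
    intro b
    have hA := Aref_compare (fun a => √(r a)) (fun a => √(q a)) (∑ s, b s)
    have hA4 := Aref_le_four r hr hr1 (∑ s, b s)
    have hA0 := Aref_nonneg (fun a => √(r a)) (∑ s, b s)
    change _ ≤ _ + 6 * He q r at hA
    have hs1 := Real.sq_sqrt (hq' b)
    have hs2 := Real.sq_sqrt (hr' b)
    set Q := ∏ s, q (b s)
    set R := ∏ s, r (b s)
    set A := Aref (fun a => √(r a)) (∑ s, b s)
    set A' := Aref (fun a => √(q a)) (∑ s, b s)
    have h3 : R ≤ 2 * Q + 2 * (√Q - √R) ^ 2 := by nlinarith [sq_nonneg (2 * √Q - √R)]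
    have hQ : 0 ≤ Q := hq' b
    calc R * A ≤ (2 * Q + 2 * (√Q - √R) ^ 2) * A := mul_le_mul_of_nonneg_right h3 hA0
      _ = 2 * (Q * A) + 2 * (√Q - √R) ^ 2 * A := by ring
      _ ≤ 2 * (Q * (3 * A' + 6 * He q r)) + 2 * (√Q - √R) ^ 2 * 4 := by gcongr
      _ = _ := by ring
  have h3 := Finset.sum_le_sum fun b (_ : b ∈ univ) => h2 b
  simp_rw [Finset.sum_add_distrib, ← Finset.mul_sum, sum_prod_one (k + 1) q h1] at h3
  change eta k r ≤ 6 * eta k q + _ + _ at h3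
  push_cast at hp
  linarith

/-- sum over `Z` -/
noncomputable def Zs (d : ℕ) (x : ZMod p → ℝ) : ℝ :=
  ∑ a : Fin d → ZMod p, if ∑ r, a r = 0 then ∏ r, x (a r) else 0

lemma amgm (k : ℕ) (w : Fin (k + 3) → ℝ) (hw : ∀ i, 0 ≤ w i) :
    (∏ i, w i) ^ (1 / ((k : ℝ) + 3)) ≤ (∑ i, w i - (√(w 0) - √(w 1)) ^ 2) / (k + 3) := by
  set z : Fin (k + 3) → ℝ := Fin.cons (√(w 0) * √(w 1)) (Fin.cons (√(w 0) * √(w 1))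
    (fun i : Fin (k + 1) => w i.succ.succ)) with hz
  have hz0 : ∀ i, 0 ≤ z i := by
    intro i
    refine Fin.cases ?_ (fun i => ?_) i
    · simp [hz]; positivity
    · refine Fin.cases ?_ (fun i => ?_) i
      · simp [hz]; positivity
      · simp [hz, hw]
  have hk : (0 : ℝ) < k + 3 := by positivity
  have h := Real.geom_mean_le_arith_mean_weighted univ (fun _ : Fin (k + 3) => 1 / ((k : ℝ) + 3)) z
    (fun _ _ => by positivity) (by simp; field_simp) (fun i _ => hz0 i)
  rw [Real.finsetProd_rpow _ _ (fun i _ => hz0 i), ← Finset.mul_sum] at h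
  have e1 : ∏ i, z i = ∏ i, w i := by
    rw [Fin.prod_univ_succ z, Fin.prod_univ_succ (fun i : Fin (k + 2) => z i.succ),
      Fin.prod_univ_succ w, Fin.prod_univ_succ (fun i : Fin (k + 2) => w i.succ)]
    simp only [hz, Fin.cons_zero, Fin.cons_succ]
    rw [← mul_assoc, ← mul_assoc (w 0)]
    congr 1
    have := Real.mul_self_sqrt (hw 0)
    have h1 := Real.mul_self_sqrt (hw 1)
    change _ = w 0 * w 1
    calc √(w 0) * √(w 1) * (√(w 0) * √(w 1)) = (√(w 0) * √(w 0)) * (√(w 1) * √(w 1)) := by ring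
      _ = _ := by rw [this, h1]
  have e2 : ∑ i, z i = ∑ i, w i - (√(w 0) - √(w 1)) ^ 2 := by
    rw [Fin.sum_univ_succ z, Fin.sum_univ_succ (fun i : Fin (k + 2) => z i.succ),
      Fin.sum_univ_succ w, Fin.sum_univ_succ (fun i : Fin (k + 2) => w i.succ)]
    simp only [hz, Fin.cons_zero, Fin.cons_succ]
    have := Real.sq_sqrt (hw 0)
    have h1 := Real.sq_sqrt (hw 1)
    change _ = w 0 + (w 1 + _) - _
    rw [sub_sq, this, h1]
    ring
  rw [e1, e2] at h
  refine h.trans (le_of_eq ?_)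
  ring

lemma sum_w (m : ℕ) (q : ZMod p → ℝ) (h1 : ∑ a, q a = 1) (r : Fin (m + 1)) :
    ∑ a : Fin (m + 1) → ZMod p, (if ∑ s, a s = 0 then ∏ s : Fin m, q (a (r.succAbove s)) else 0)
      = 1 := by
  rw [← (Fin.insertNthEquiv (fun _ : Fin (m + 1) => ZMod p) r).sum_comp, Fintype.sum_prod_type,
    Finset.sum_comm]
  rw [← sum_prod_one m q h1]
  refine Finset.sum_congr rfl fun b _ => ?_
  simp only [Fin.insertNthEquiv_apply, Fin.sum_univ_succAbove _ r, Fin.insertNth_apply_same,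
    Fin.insertNth_apply_succAbove]
  simp_rw [add_eq_zero_iff_eq_neg]
  simp

lemma young (k : ℕ) (q : ZMod p → ℝ) (hq : ∀ a, 0 ≤ q a) (h1 : ∑ a, q a = 1) :
    Zs (k + 3) (fun a => (q a) ^ (((k : ℝ) + 2) / (k + 3))) ≤ 1 - eta k q / (k + 3) := by
  have hk : (0 : ℝ) < k + 3 := by positivity
  set w : (Fin (k + 3) → ZMod p) → Fin (k + 3) → ℝ :=
    fun a r => ∏ s : Fin (k + 2), q (a (r.succAbove s)) with hw
  have hw0 : ∀ a r, 0 ≤ w a r := fun a r => Finset.prod_nonneg fun _ _ => hq _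
  have pt : ∀ a, ∏ r, (q (a r)) ^ (((k : ℝ) + 2) / (k + 3)) ≤
      (∑ r, w a r - (√(w a 0) - √(w a 1)) ^ 2) / (k + 3) := by
    intro a
    have hA := amgm k (w a) (hw0 a)
    rw [Real.finsetProd_rpow _ _ (fun i _ => hq _)]
    set P := ∏ r, q (a r) with hP
    have hP0 : 0 ≤ P := Finset.prod_nonneg fun _ _ => hq _
    rcases hP0.eq_or_lt with h0 | h0
    · rw [← h0, Real.zero_rpow (by positivity)]
      refine le_trans ?_ hA
      exact Real.rpow_nonneg (Finset.prod_nonneg fun _ _ => hw0 _ _) _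
    · have e1 : ∀ r, q (a r) * w a r = P := fun r =>
        (Fin.prod_univ_succAbove (fun s => q (a s)) r).symm
      have e2 : P * ∏ r, w a r = P * P ^ (k + 2) := by
        calc P * ∏ r, w a r = ∏ r, (q (a r) * w a r) := by rw [Finset.prod_mul_distrib]
          _ = P * P ^ (k + 2) := by simp_rw [e1]; simp; ring
      have e3 := mul_left_cancel₀ h0.ne' e2
      rw [e3, ← Real.rpow_natCast, ← Real.rpow_mul hP0] at hA
      refine le_trans (le_of_eq ?_) hA
      congr 1
      push_cast
      ring
  have e4 : eta k q = ∑ a : Fin (k + 3) → ZMod p,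
      if ∑ s, a s = 0 then (√(w a 0) - √(w a 1)) ^ 2 else 0 := by
    rw [← (Fin.consEquiv (fun _ : Fin (k + 3) => ZMod p)).sum_comp, Fintype.sum_prod_type]
    simp_rw [← (Fin.consEquiv (fun _ : Fin (k + 2) => ZMod p)).sum_comp, Fintype.sum_prod_type]
    have : ∀ x : ZMod p, ∑ y : ZMod p, ∑ b : Fin (k + 1) → ZMod p,
        (if ∑ s, (Fin.consEquiv (fun _ : Fin (k + 3) => ZMod p))
          (x, (Fin.consEquiv (fun _ : Fin (k + 2) => ZMod p)) (y, b)) s = 0 then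
          (√(w ((Fin.consEquiv (fun _ : Fin (k + 3) => ZMod p))
          (x, (Fin.consEquiv (fun _ : Fin (k + 2) => ZMod p)) (y, b))) 0) -
          √(w ((Fin.consEquiv (fun _ : Fin (k + 3) => ZMod p))
          (x, (Fin.consEquiv (fun _ : Fin (k + 2) => ZMod p)) (y, b))) 1)) ^ 2 else 0) =
        ∑ b : Fin (k + 1) → ZMod p, ∑ y : ZMod p, if y = -(∑ s, b s) - x then
          (∏ s, q (b s)) * (√(q x) - √(q y)) ^ 2 else 0 := by
      intro x
      rw [Finset.sum_comm]
      refine Finset.sum_congr rfl fun b _ => Finset.sum_congr rfl fun y _ => ?_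
      have c1 : (∑ s, (Fin.consEquiv (fun _ : Fin (k + 3) => ZMod p))
          (x, (Fin.consEquiv (fun _ : Fin (k + 2) => ZMod p)) (y, b)) s = 0) ↔
          y = -(∑ s, b s) - x := by
        simp only [Fin.consEquiv, Equiv.coe_fn_mk, Fin.sum_univ_succ (n := k + 2), Fin.cons_zero,
          Fin.cons_succ, Fin.sum_univ_succ (n := k + 1)]
        constructor
        · intro h; linear_combination h
        · intro h; linear_combination h
      simp only [c1]
      congr 1
      have hb : 0 ≤ ∏ s, q (b s) := Finset.prod_nonneg fun _ _ => hq _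
      have c2 : w ((Fin.consEquiv (fun _ : Fin (k + 3) => ZMod p))
          (x, (Fin.consEquiv (fun _ : Fin (k + 2) => ZMod p)) (y, b))) 0 =
          q y * ∏ s, q (b s) := by
        simp [hw, Fin.consEquiv, Fin.prod_univ_succ (n := k + 1)]
      have c3 : w ((Fin.consEquiv (fun _ : Fin (k + 3) => ZMod p))
          (x, (Fin.consEquiv (fun _ : Fin (k + 2) => ZMod p)) (y, b))) 1 =
          q x * ∏ s, q (b s) := by
        simp [hw, Fin.consEquiv, Fin.prod_univ_succ (n := k + 1)]
      rw [c2, c3, Real.sqrt_mul (hq _), Real.sqrt_mul (hq _)]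
      have := Real.sq_sqrt hb
      rw [← sub_mul, mul_pow, this]
      ring
    rw [Finset.sum_congr rfl fun x _ => this x]
    rw [Finset.sum_comm]
    unfold eta Aref
    refine Finset.sum_congr rfl fun b _ => ?_
    rw [Finset.mul_sum]
    refine Finset.sum_congr rfl fun x _ => ?_
    simp
  have e5 : (k + 3 : ℝ) = ∑ a : Fin (k + 3) → ZMod p, if ∑ s, a s = 0 then ∑ r, w a r else 0 := by
    have : ∀ a : Fin (k + 3) → ZMod p, (if ∑ s, a s = 0 then ∑ r, w a r else 0) =
        ∑ r, if ∑ s, a s = 0 then w a r else 0 := by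
      intro a; split_ifs <;> simp
    simp_rw [this]
    rw [Finset.sum_comm]
    have h2 : ∀ r, ∑ a : Fin (k + 3) → ZMod p, (if ∑ s, a s = 0 then w a r else 0) = 1 :=
      fun r => sum_w (k + 2) q h1 r
    simp_rw [h2]
    simp
  have e6 : 1 - eta k q / (k + 3) = ∑ a : Fin (k + 3) → ZMod p, if ∑ s, a s = 0 then
      (∑ r, w a r - (√(w a 0) - √(w a 1)) ^ 2) / (k + 3) else 0 := by
    have : 1 - eta k q / (k + 3) = ((k + 3) - eta k q) / (k + 3) := by field_simp
    rw [this, e4]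
    conv_lhs => enter [1, 1]; rw [e5]
    rw [← Finset.sum_sub_distrib, Finset.sum_div]
    refine Finset.sum_congr rfl fun a _ => ?_
    split_ifs <;> simp
  rw [e6]
  unfold Zs
  refine Finset.sum_le_sum fun a _ => ?_
  split_ifs
  · exact pt a
  · exact le_rfl


/-- number of admissible row assignments -/
def Ncount (d ν : ℕ) (m : ZMod p → ℕ) : ℕ :=
  (Finset.univ.filter (fun a : Fin ν → Fin d → ZMod p =>
    (∀ k, ∑ r, a k r = 0) ∧ (∀ j : ZMod p, (∑ k, Phi (a k) j) = m j))).card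

lemma prod_Phi (d : ℕ) (x : ZMod p → ℝ) (a : Fin d → ZMod p) :
    ∏ r, x (a r) = ∏ j, x j ^ Phi a j := by
  unfold Phi
  rw [← Finset.prod_fiberwise_of_maps_to (g := a) (t := univ) (fun _ _ => mem_univ _)]
  refine Finset.prod_congr rfl fun j _ => ?_
  rw [Finset.prod_congr rfl (g := fun _ => x j), Finset.prod_const]
  intro r hr
  rw [(Finset.mem_filter.mp hr).2]

lemma gf (d ν : ℕ) (m : ZMod p → ℕ) (x : ZMod p → ℝ) (hx : ∀ j, 0 ≤ x j) :
    (Ncount d ν m : ℝ) * ∏ j, x j ^ m j ≤ Zs d x ^ ν := by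
  unfold Zs
  rw [Fintype.sum_pow]
  unfold Ncount
  rw [← nsmul_eq_mul, ← Finset.sum_const]
  calc _ = ∑ a ∈ (Finset.univ.filter (fun a : Fin ν → Fin d → ZMod p =>
      (∀ k, ∑ r, a k r = 0) ∧ (∀ j : ZMod p, (∑ k, Phi (a k) j) = m j))),
        ∏ k, (if ∑ r, a k r = 0 then ∏ r, x (a k r) else 0) := by
        refine Finset.sum_congr rfl fun a ha => ?_
        obtain ⟨h1, h2⟩ := (Finset.mem_filter.mp ha).2
        simp_rw [h1, if_true, prod_Phi]
        rw [Finset.prod_comm]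
        refine Finset.prod_congr rfl fun j _ => ?_
        rw [Finset.prod_pow_eq_pow_sum, h2]
    _ ≤ _ := by
        refine Finset.sum_le_sum_of_subset_of_nonneg (Finset.filter_subset _ _) fun a _ _ => ?_
        refine Finset.prod_nonneg fun k _ => ?_
        split_ifs
        · exact Finset.prod_nonneg fun _ _ => hx _
        · exact le_rfl

lemma Zs_nonneg (d : ℕ) (x : ZMod p → ℝ) (hx : ∀ j, 0 ≤ x j) : 0 ≤ Zs d x := by
  refine Finset.sum_nonneg fun a _ => ?_
  split_ifs
  · exact Finset.prod_nonneg fun _ _ => hx _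
  · exact le_rfl

/-- entropy function -/
noncomputable def Lf (m : ℕ) : ℝ := m * Real.log m - m

lemma fact_lower (m : ℕ) : Real.exp (Lf m) ≤ (m.factorial : ℝ) := by
  rcases Nat.eq_zero_or_pos m with rfl | hm
  · simp [Lf]
  · have hm' : (0 : ℝ) < m := by exact_mod_cast hm
    have h := Real.pow_div_factorial_le_exp (m : ℝ) hm'.le m
    have hf : (0 : ℝ) < m.factorial := by exact_mod_cast Nat.factorial_pos m
    rw [div_le_iff₀ hf] at h
    unfold Lf
    rw [Real.exp_sub, ← Real.log_pow, Real.exp_log (by positivity), div_le_iff₀ (Real.exp_pos _)]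
    linarith

lemma fact_upper_aux (m : ℕ) (hm : 0 < m) :
    Real.log (m.factorial : ℝ) ≤ Lf m + 1 + Real.log m := by
  induction m, hm using Nat.le_induction with
  | base => simp [Lf]
  | succ m hm ih =>
    have hm' : (0 : ℝ) < m := by exact_mod_cast hm
    rw [Nat.factorial_succ]
    push_cast
    rw [Real.log_mul (by positivity) (by positivity)]
    have h1 : Real.log ((m : ℝ) / (m + 1)) ≤ m / (m + 1) - 1 :=
      Real.log_le_sub_one_of_pos (by positivity)
    rw [Real.log_div (by positivity) (by positivity)] at h1
    have h2 : (m : ℝ) / (m + 1) - 1 = - (1 / (m + 1)) := by field_simp; ring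
    rw [h2] at h1
    have h3 : ((m : ℝ) + 1) * (Real.log m - Real.log (m + 1)) ≤ -1 := by
      calc ((m : ℝ) + 1) * (Real.log m - Real.log (m + 1)) ≤ (m + 1) * (- (1 / (m + 1))) :=
            mul_le_mul_of_nonneg_left h1 (by positivity)
        _ = -1 := by field_simp
    unfold Lf at ih ⊢
    push_cast
    linarith

lemma fact_upper (m B : ℕ) (h : m ≤ B) :
    (m.factorial : ℝ) ≤ Real.exp (Lf m + (1 + Real.log (B + 1))) := by
  rcases Nat.eq_zero_or_pos m with rfl | hm
  · simp only [Lf, Nat.factorial_zero, Nat.cast_one, CharP.cast_eq_zero, zero_mul, sub_zero, zero_add]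
    have : 0 ≤ Real.log ((B : ℝ) + 1) := Real.log_nonneg (by linarith [Nat.cast_nonneg (α := ℝ) B])
    exact Real.one_le_exp (by linarith)
  · have hf : (0 : ℝ) < m.factorial := by exact_mod_cast Nat.factorial_pos m
    rw [← Real.log_le_iff_le_exp hf]
    refine (fact_upper_aux m hm).trans ?_
    have hm' : (0 : ℝ) < m := by exact_mod_cast hm
    have hB : (m : ℝ) ≤ B := by exact_mod_cast h
    have : Real.log m ≤ Real.log (B + 1) := Real.log_le_log hm' (by linarith)
    linarith

lemma Lf_half (h : ℕ) : Lf (2 * h) - h * Real.log 2 - Lf h = Lf (2 * h) / 2 := by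
  rcases Nat.eq_zero_or_pos h with rfl | hm
  · simp [Lf]
  · have hm' : (0 : ℝ) < h := by exact_mod_cast hm
    unfold Lf
    push_cast
    rw [Real.log_mul (by norm_num) (by positivity)]
    ring

lemma df_upper (m B : ℕ) (hm : Even m) (h : m ≤ B) :
    (m.factorial : ℝ) / (2 ^ (m / 2) * ((m / 2).factorial : ℝ)) ≤
      Real.exp (Lf m / 2 + (1 + Real.log (B + 1))) := by
  obtain ⟨h', rfl⟩ := hm
  have e : h' + h' = 2 * h' := by ring
  rw [e] at h ⊢
  have e2 : 2 * h' / 2 = h' := by omega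
  rw [e2]
  have hf : (0 : ℝ) < h'.factorial := by exact_mod_cast Nat.factorial_pos _
  rw [div_le_iff₀ (by positivity)]
  have h1 := fact_upper (2 * h') B h
  have h2 := fact_lower h'
  have e3 : (2 : ℝ) ^ h' = Real.exp (h' * Real.log 2) := by
    rw [← Real.log_pow, Real.exp_log (by positivity)]
  calc ((2 * h').factorial : ℝ) ≤ Real.exp (Lf (2 * h') + (1 + Real.log (B + 1))) := h1
    _ = Real.exp (Lf (2 * h') / 2 + (1 + Real.log (B + 1))) *
        (Real.exp (h' * Real.log 2) * Real.exp (Lf h')) := by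
        rw [← Real.exp_add, ← Real.exp_add]
        congr 1
        have := Lf_half h'
        linarith
    _ ≤ _ := by rw [e3]; gcongr

lemma pre_upper (m B : ℕ) (hm : Even m) (h : m ≤ B) :
    (2 : ℝ) ^ (m / 2) * ((m / 2).factorial : ℝ) / (m.factorial : ℝ) ≤
      Real.exp (- Lf m / 2 + (1 + Real.log (B + 1))) := by
  obtain ⟨h', rfl⟩ := hm
  have e : h' + h' = 2 * h' := by ring
  rw [e] at h ⊢
  have e2 : 2 * h' / 2 = h' := by omega
  rw [e2]
  have hf : (0 : ℝ) < (2 * h').factorial := by exact_mod_cast Nat.factorial_pos _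
  rw [div_le_iff₀ (by positivity)]
  have h1 := fact_upper h' B (by omega)
  have h2 := fact_lower (2 * h')
  have e3 : (2 : ℝ) ^ h' = Real.exp (h' * Real.log 2) := by
    rw [← Real.log_pow, Real.exp_log (by positivity)]
  rw [e3]
  calc _ ≤ Real.exp (h' * Real.log 2) * Real.exp (Lf h' + (1 + Real.log (B + 1))) := by gcongr
    _ = Real.exp (- Lf (2 * h') / 2 + (1 + Real.log (B + 1))) * Real.exp (Lf (2 * h')) := by
        rw [← Real.exp_add, ← Real.exp_add]
        congr 1
        have := Lf_half h'
        linarith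
    _ ≤ _ := by gcongr

/-- splitting of a double product into off-diagonal and diagonal parts -/
lemma prod_split {α : Type*} [CommMonoid α] (g : ZMod p → ZMod p → α) :
    ∏ i, ∏ j, g i j =
      (∏ q ∈ Finset.univ.filter (fun q : ZMod p × ZMod p => q.1.val < q.2.val),
        (g q.1 q.2 * g q.2 q.1)) * ∏ i, g i i := by
  rw [← Fintype.prod_prod_type' (f := g)]
  have h1 := Finset.prod_filter_mul_prod_filter_not univ
    (fun q : ZMod p × ZMod p => q.1.val < q.2.val) (fun q => g q.1 q.2)
  have h2 := Finset.prod_filter_mul_prod_filter_not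
    (univ.filter (fun q : ZMod p × ZMod p => ¬ q.1.val < q.2.val))
    (fun q : ZMod p × ZMod p => q.2.val < q.1.val) (fun q => g q.1 q.2)
  rw [← h1, ← h2, Finset.prod_mul_distrib, mul_assoc]
  congr 1
  congr 1
  · refine Finset.prod_bij' (fun q _ => q.swap) (fun q _ => q.swap) ?_ ?_ ?_ ?_ ?_
    · intro q hq; simp at hq ⊢; exact hq.2
    · intro q hq; simp at hq ⊢; exact ⟨hq.le, hq⟩
    · intro q _; simp
    · intro q _; simp
    · intro q _; simp
  · symm
    refine Finset.prod_bij' (fun i _ => (i, i)) (fun q _ => q.1) ?_ ?_ ?_ ?_ ?_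
    · intro q _; simp
    · intro q _; simp
    · intro q _; simp
    · intro q hq
      simp at hq
      have : q.1 = q.2 := ZMod.val_injective p (le_antisymm hq.2 hq.1)
      exact Prod.ext rfl this
    · intro q _; simp

lemma sum_split {α : Type*} [AddCommMonoid α] (g : ZMod p → ZMod p → α) :
    ∑ i, ∑ j, g i j =
      (∑ q ∈ Finset.univ.filter (fun q : ZMod p × ZMod p => q.1.val < q.2.val),
        (g q.1 q.2 + g q.2 q.1)) + ∑ i, g i i :=
  prod_split (α := Multiplicative α) g

lemma row_bound (k ν : ℕ) (m : ZMod p → ℕ) (hm : ∑ j, m j = (k + 3) * ν) :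
    (Ncount (k + 3) ν m : ℝ) ≤ Real.exp (-((k + 2) / (k + 3)) *
      ∑ j, m j * Real.log (m j / ((k + 3) * ν)) -
      ν * eta k (fun j => (m j : ℝ) / ((k + 3) * ν)) / (k + 3)) := by
  set q : ZMod p → ℝ := fun j => (m j : ℝ) / ((k + 3) * ν) with hq
  have hq0 : ∀ j, 0 ≤ q j := fun j => by positivity
  set x : ZMod p → ℝ := fun a => (q a) ^ (((k : ℝ) + 2) / (k + 3)) with hx
  have hx0 : ∀ j, 0 ≤ x j := fun j => Real.rpow_nonneg (hq0 j) _
  have h := gf (k + 3) ν m x hx0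
  have h1 : ∏ j, x j ^ m j = Real.exp ((k + 2) / (k + 3) * ∑ j, m j * Real.log (q j)) := by
    rw [Finset.mul_sum, Real.exp_sum]
    refine Finset.prod_congr rfl fun j _ => ?_
    rcases Nat.eq_zero_or_pos (m j) with h0 | h0
    · simp [h0]
    · have hν : 0 < ν := by
        rcases Nat.eq_zero_or_pos ν with hν | hν
        · rw [hν, mul_zero] at hm
          have := (Finset.sum_eq_zero_iff.mp hm) j (mem_univ _)
          omega
        · exact hν
      have : 0 < q j := by
        have : (0 : ℝ) < m j := by exact_mod_cast h0
        have : (0 : ℝ) < ν := by exact_mod_cast hν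
        simp only [hq]; positivity
      simp only [hx]
      rw [Real.rpow_def_of_pos this, ← Real.exp_nat_mul]
      congr 1; ring
  have h2 : Zs (k + 3) x ^ ν ≤ Real.exp (- (ν * eta k q / (k + 3))) := by
    rcases Nat.eq_zero_or_pos ν with hν | hν
    · simp [hν]
    · have hν' : (0 : ℝ) < ν := by exact_mod_cast hν
      have hs : ∑ j, q j = 1 := by
        simp only [hq]
        rw [← Finset.sum_div, div_eq_one_iff_eq (by positivity)]
        exact_mod_cast hm
      have hy := young k q hq0 hs
      have h3 : Zs (k + 3) x ≤ Real.exp (-(eta k q / (k + 3))) := by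
        refine hy.trans ?_
        have := Real.add_one_le_exp (-(eta k q / (k + 3)))
        linarith
      calc Zs (k + 3) x ^ ν ≤ Real.exp (-(eta k q / (k + 3))) ^ ν :=
            pow_le_pow_left₀ (Zs_nonneg _ _ hx0) h3 _
        _ = _ := by rw [← Real.exp_nat_mul]; congr 1; ring
  rw [h1] at h
  have h4 := h.trans h2
  rw [← le_div_iff₀ (Real.exp_pos _), ← Real.exp_sub] at h4
  refine h4.trans (le_of_eq ?_)
  congr 1
  ring


/-- admissible matrices with row data -/
structure Good (d n : ℕ) (M : ZMod p → ZMod p → ℕ) (ν : ZMod p → ℕ) : Prop where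
  symm : ∀ i j, M i j = M j i
  even : ∀ i, Even (M i i)
  rows : ∀ i, ∑ j, M i j = d * ν i
  tot : ∑ i, ν i = n

/-- the weight of a matrix -/
noncomputable def wt (d n : ℕ) (M : ZMod p → ZMod p → ℕ) (ν : ZMod p → ℕ) : ℝ :=
  ((n.factorial : ℝ) / ∏ i : ZMod p, ((ν i).factorial : ℝ)) *
  (∏ q ∈ Finset.univ.filter (fun q : ZMod p × ZMod p => q.1.val < q.2.val),
      ((M q.1 q.2).factorial : ℝ)) *
  (∏ i : ZMod p, ((M i i).factorial : ℝ) / (2 ^ (M i i / 2) * ((M i i / 2).factorial : ℝ))) *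
  (∏ i : ZMod p, (Ncount d (ν i) (M i) : ℝ))

/-- the prefactor -/
noncomputable def pre (d n : ℕ) : ℝ :=
  (2 : ℝ) ^ (n * d / 2) * ((n * d / 2).factorial : ℝ) / ((n * d).factorial : ℝ)

/-- normalized row -/
noncomputable def qv (d : ℕ) (M : ZMod p → ZMod p → ℕ) (ν : ZMod p → ℕ) (i : ZMod p) :
    ZMod p → ℝ := fun j => (M i j : ℝ) / (d * ν i)

/-- normalized row sums -/
noncomputable def pv (n : ℕ) (ν : ZMod p → ℕ) : ZMod p → ℝ := fun j => (ν j : ℝ) / n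

lemma Good.le {d n : ℕ} {M : ZMod p → ZMod p → ℕ} {ν : ZMod p → ℕ} (h : Good d n M ν)
    (i j : ZMod p) : M i j ≤ d * n := by
  calc M i j ≤ ∑ j, M i j := Finset.single_le_sum (fun _ _ => Nat.zero_le _) (mem_univ j)
    _ = d * ν i := h.rows i
    _ ≤ d * n := by
      refine Nat.mul_le_mul_left _ ?_
      rw [← h.tot]
      exact Finset.single_le_sum (f := ν) (fun _ _ => Nat.zero_le _) (mem_univ i)

lemma Good.M_pos {d n : ℕ} {M : ZMod p → ZMod p → ℕ} {ν : ZMod p → ℕ} (h : Good d n M ν)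
    {i j : ZMod p} (hij : 0 < M i j) : 0 < ν i ∧ 0 < ν j := by
  have key : ∀ a b, 0 < M a b → 0 < ν a := by
    intro a b hab
    rcases Nat.eq_zero_or_pos (ν a) with h0 | h0
    · have := h.rows a
      rw [h0, mul_zero] at this
      have := (Finset.sum_eq_zero_iff.mp this) b (mem_univ _)
      omega
    · exact h0
  exact ⟨key i j hij, key j i (by rwa [h.symm j i])⟩

lemma Good.qv_sum {d n : ℕ} (hd : 0 < d) {M : ZMod p → ZMod p → ℕ} {ν : ZMod p → ℕ}
    (h : Good d n M ν) {i : ZMod p} (hi : 0 < ν i) : ∑ j, qv d M ν i j = 1 := by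
  unfold qv
  have : (0 : ℝ) < ν i := by exact_mod_cast hi
  have : (0 : ℝ) < d := by exact_mod_cast hd
  rw [← Finset.sum_div, div_eq_one_iff_eq (by positivity)]
  exact_mod_cast h.rows i

lemma qv_nonneg (d : ℕ) (M : ZMod p → ZMod p → ℕ) (ν : ZMod p → ℕ) (i j : ZMod p) :
    0 ≤ qv d M ν i j := by unfold qv; positivity

lemma pv_nonneg (n : ℕ) (ν : ZMod p → ℕ) (j : ZMod p) : 0 ≤ pv n ν j := by
  unfold pv; positivity

lemma Good.pv_sum {d n : ℕ} (hn : 0 < n) {M : ZMod p → ZMod p → ℕ} {ν : ZMod p → ℕ}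
    (h : Good d n M ν) : ∑ j, pv n ν j = 1 := by
  unfold pv
  have : (0 : ℝ) < n := by exact_mod_cast hn
  rw [← Finset.sum_div, div_eq_one_iff_eq (by positivity)]
  exact_mod_cast h.tot

lemma row_log {d n : ℕ} (hd : 0 < d) (hn : 0 < n) {M : ZMod p → ZMod p → ℕ} {ν : ZMod p → ℕ}
    (h : Good d n M ν) (i : ZMod p) :
    ∑ j, (M i j : ℝ) * (Real.log (pv n ν j) - Real.log (qv d M ν i j)) ≤
      - (d * ν i * He (qv d M ν i) (pv n ν)) := by
  have hd' : (0 : ℝ) < d := by exact_mod_cast hd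
  have hn' : (0 : ℝ) < n := by exact_mod_cast hn
  rcases Nat.eq_zero_or_pos (ν i) with h0 | h0
  · rw [h0]
    refine le_of_eq ?_
    simp only [CharP.cast_eq_zero, mul_zero, zero_mul, neg_zero]
    refine Finset.sum_eq_zero fun j _ => ?_
    have : M i j = 0 := by
      by_contra hne
      have := (h.M_pos (Nat.pos_of_ne_zero hne)).1
      omega
    simp [this]
  · have h0' : (0 : ℝ) < ν i := by exact_mod_cast h0
    rw [He_eq _ _ (qv_nonneg _ _ _ _) (h.qv_sum hd h0) (pv_nonneg _ _) (h.pv_sum hn)]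
    have e : - ((d : ℝ) * ν i * (2 - 2 * ∑ j, √(qv d M ν i j) * √(pv n ν j))) =
        ∑ j, (2 * d * ν i * (√(qv d M ν i j) * √(pv n ν j)) - 2 * d * ν i * qv d M ν i j) := by
      rw [Finset.sum_sub_distrib, ← Finset.mul_sum, ← Finset.mul_sum, h.qv_sum hd h0]; ring
    rw [e]
    refine Finset.sum_le_sum fun j _ => ?_
    rcases Nat.eq_zero_or_pos (M i j) with hz | hz
    · simp [hz, qv]
    · have hz' : (0 : ℝ) < M i j := by exact_mod_cast hz
      have hj' : (0 : ℝ) < ν j := by exact_mod_cast (h.M_pos hz).2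
      have hq : 0 < qv d M ν i j := by unfold qv; positivity
      have hp : 0 < pv n ν j := by unfold pv; positivity
      have hM : (M i j : ℝ) = d * ν i * qv d M ν i j := by unfold qv; field_simp
      have h1 : Real.log (√(pv n ν j) / √(qv d M ν i j)) ≤ √(pv n ν j) / √(qv d M ν i j) - 1 :=
        Real.log_le_sub_one_of_pos (by positivity)
      rw [Real.log_div (by positivity) (by positivity), Real.log_sqrt hp.le, Real.log_sqrt hq.le] at h1
      have hs : √(qv d M ν i j) * √(qv d M ν i j) = qv d M ν i j := Real.mul_self_sqrt hq.le
      have hs0 : 0 < √(qv d M ν i j) := Real.sqrt_pos.mpr hq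
      have h2 : qv d M ν i j * (Real.log (pv n ν j) - Real.log (qv d M ν i j)) ≤
          2 * (√(qv d M ν i j) * √(pv n ν j)) - 2 * qv d M ν i j := by
        have h3 : qv d M ν i j * (√(pv n ν j) / √(qv d M ν i j)) =
            √(qv d M ν i j) * √(pv n ν j) := by
          rw [mul_div_assoc', div_eq_iff hs0.ne']
          linear_combination (-√(pv n ν j)) * hs
        have := mul_le_mul_of_nonneg_left h1 hq.le
        rw [mul_sub (qv d M ν i j) (√(pv n ν j) / √(qv d M ν i j)), h3] at this
        linarith
      have h4 := mul_le_mul_of_nonneg_left h2 (mul_pos hd' h0').le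
      calc _ = d * ν i * (qv d M ν i j * (Real.log (pv n ν j) - Real.log (qv d M ν i j))) := by
            nth_rewrite 1 [hM]; ring
        _ ≤ _ := h4
        _ = _ := by ring

lemma log_identity {d n : ℕ} (hd : 0 < d) (hn : 0 < n) {M : ZMod p → ZMod p → ℕ}
    {ν : ZMod p → ℕ} (h : Good d n M ν) :
    Lf n - ∑ i, Lf (ν i) + (∑ i, ∑ j, Lf (M i j)) / 2 - Lf (n * d) / 2 -
      (((d : ℝ) - 1) / d) * ∑ i, ∑ j, (M i j : ℝ) * Real.log (qv d M ν i j) =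
    ((d - 2) / (2 * d)) * ∑ i, ∑ j,
      (M i j : ℝ) * (Real.log (pv n ν j) - Real.log (qv d M ν i j)) := by
  have hd' : (0 : ℝ) < d := by exact_mod_cast hd
  have hn' : (0 : ℝ) < n := by exact_mod_cast hn
  set Q := ∑ i, ∑ j, (M i j : ℝ) * Real.log (qv d M ν i j) with hQ
  set V := ∑ i, (ν i : ℝ) * Real.log (ν i) with hV
  have rows : ∀ i, ∑ j, (M i j : ℝ) = d * ν i := fun i => by exact_mod_cast h.rows i
  have tot : ∑ i, (ν i : ℝ) = n := by exact_mod_cast h.tot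
  have e1 : ∑ i, Lf (ν i) = V - n := by
    unfold Lf; rw [Finset.sum_sub_distrib, tot]
  have e2 : ∑ i, ∑ j, Lf (M i j) = d * n * Real.log d + d * V + Q - d * n := by
    have : ∀ i, ∑ j, Lf (M i j) = d * ν i * Real.log d + d * (ν i * Real.log (ν i)) +
        (∑ j, (M i j : ℝ) * Real.log (qv d M ν i j)) - d * ν i := by
      intro i
      have t : ∀ j, Lf (M i j) = (M i j : ℝ) * (Real.log d + Real.log (ν i)) +
          (M i j : ℝ) * Real.log (qv d M ν i j) - M i j := by
        intro j
        rcases Nat.eq_zero_or_pos (M i j) with hz | hz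
        · simp [Lf, hz]
        · have hz' : (0 : ℝ) < M i j := by exact_mod_cast hz
          have hi' : (0 : ℝ) < ν i := by exact_mod_cast (h.M_pos hz).1
          unfold Lf qv
          rw [Real.log_div (by positivity) (by positivity), Real.log_mul (by positivity) (by positivity)]
          ring
      simp_rw [t]
      rw [Finset.sum_sub_distrib, Finset.sum_add_distrib, ← Finset.sum_mul, rows]
      ring
    simp_rw [this]
    rw [Finset.sum_sub_distrib, Finset.sum_add_distrib, Finset.sum_add_distrib, ← Finset.sum_mul,
      ← Finset.mul_sum, ← Finset.mul_sum, tot]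
  have e3 : ∑ i, ∑ j, (M i j : ℝ) * (Real.log (pv n ν j) - Real.log (qv d M ν i j)) =
      d * V - d * n * Real.log n - Q := by
    simp_rw [mul_sub]
    simp_rw [Finset.sum_sub_distrib]
    congr 1
    rw [Finset.sum_comm]
    have : ∀ j, ∑ i, (M i j : ℝ) * Real.log (pv n ν j) =
        d * (ν j * Real.log (ν j)) - d * ν j * Real.log n := by
      intro j
      rw [← Finset.sum_mul]
      have : ∑ i, (M i j : ℝ) = d * ν j := by
        rw [← rows j]; exact Finset.sum_congr rfl fun i _ => by rw [h.symm]
      rw [this]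
      rcases Nat.eq_zero_or_pos (ν j) with hz | hz
      · simp [hz]
      · have hz' : (0 : ℝ) < ν j := by exact_mod_cast hz
        unfold pv
        rw [Real.log_div (by positivity) (by positivity)]; ring
    simp_rw [this]
    rw [Finset.sum_sub_distrib, ← Finset.mul_sum, ← Finset.sum_mul, ← Finset.mul_sum, tot]
  rw [e1, e2, e3]
  unfold Lf
  push_cast
  rw [Real.log_mul (by positivity) (by positivity)]
  field_simp
  ring

/-- the exponent -/
noncomputable def En (k n : ℕ) (M : ZMod p → ZMod p → ℕ) (ν : ZMod p → ℕ) : ℝ :=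
  ∑ i, (ν i : ℝ) * (((k : ℝ) + 1) / 2 * He (qv (k + 3) M ν i) (pv n ν) +
    eta k (qv (k + 3) M ν i) / (k + 3))

lemma card_lt_le : ((Finset.univ.filter
    (fun q : ZMod p × ZMod p => q.1.val < q.2.val)).card : ℝ) + p + 2 ≤ 3 * (p : ℝ) ^ 2 := by
  have h2 : (2 : ℝ) ≤ p := by exact_mod_cast (Fact.out : p.Prime).two_le
  have h1 : ((Finset.univ.filter
    (fun q : ZMod p × ZMod p => q.1.val < q.2.val)).card : ℝ) ≤ (p : ℝ) ^ 2 := by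
    have : (Finset.univ.filter (fun q : ZMod p × ZMod p => q.1.val < q.2.val)).card ≤ p ^ 2 := by
      refine (Finset.card_filter_le _ _).trans ?_
      simp [ZMod.card, sq]
    exact_mod_cast this
  nlinarith

lemma term_bound {k n : ℕ} (hn : 0 < n) {M : ZMod p → ZMod p → ℕ} {ν : ZMod p → ℕ}
    (hev : Even (n * (k + 3))) (h : Good (k + 3) n M ν) :
    pre (k + 3) n * wt (k + 3) n M ν ≤
      Real.exp (3 * (p : ℝ) ^ 2 * (1 + Real.log (((k + 3) * n : ℕ) + 1)) - En k n M ν) := by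
  set B := (k + 3) * n with hB
  set o := 1 + Real.log ((B : ℝ) + 1) with ho
  have ho0 : 0 ≤ o := by
    have : 0 ≤ Real.log ((B : ℝ) + 1) := Real.log_nonneg (by linarith [Nat.cast_nonneg (α := ℝ) B])
    linarith
  set S := Finset.univ.filter (fun q : ZMod p × ZMod p => q.1.val < q.2.val) with hS
  have b1 : pre (k + 3) n ≤ Real.exp (- Lf (n * (k + 3)) / 2 + o) :=
    pre_upper _ B hev (by rw [hB, mul_comm])
  have b2 : (n.factorial : ℝ) / ∏ i : ZMod p, ((ν i).factorial : ℝ) ≤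
      Real.exp (Lf n + o - ∑ i, Lf (ν i)) := by
    rw [Real.exp_sub, Real.exp_sum]
    have := fact_upper n B (by rw [hB]; nlinarith)
    refine div_le_div₀ (Real.exp_pos _).le this (Finset.prod_pos fun i _ => Real.exp_pos _) ?_
    exact Finset.prod_le_prod (fun i _ => (Real.exp_pos _).le) fun i _ => fact_lower _
  have b3 : ∏ q ∈ S, ((M q.1 q.2).factorial : ℝ) ≤ Real.exp (∑ q ∈ S, (Lf (M q.1 q.2) + o)) := by
    rw [Real.exp_sum]
    exact Finset.prod_le_prod (fun i _ => by positivity) fun q _ => fact_upper _ _ (h.le _ _)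
  have b4 : (∏ i : ZMod p, ((M i i).factorial : ℝ) / (2 ^ (M i i / 2) * ((M i i / 2).factorial : ℝ)))
      ≤ Real.exp (∑ i, (Lf (M i i) / 2 + o)) := by
    rw [Real.exp_sum]
    exact Finset.prod_le_prod (fun i _ => by positivity) fun i _ =>
      df_upper _ _ (h.even i) (h.le _ _)
  have b5 : ∏ i : ZMod p, (Ncount (k + 3) (ν i) (M i) : ℝ) ≤ Real.exp (∑ i,
      (-(((k : ℝ) + 2) / (k + 3)) * ∑ j, M i j * Real.log (qv (k + 3) M ν i j) -
      ν i * eta k (qv (k + 3) M ν i) / (k + 3))) := by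
    rw [Real.exp_sum]
    refine Finset.prod_le_prod (fun i _ => by positivity) fun i _ => ?_
    have := row_bound k (ν i) (M i) (h.rows i)
    unfold qv
    push_cast
    exact this
  have hpre : 0 ≤ pre (k + 3) n := by unfold pre; positivity
  unfold wt
  calc _ ≤ Real.exp (- Lf (n * (k + 3)) / 2 + o) * (Real.exp (Lf n + o - ∑ i, Lf (ν i)) *
        Real.exp (∑ q ∈ S, (Lf (M q.1 q.2) + o)) * Real.exp (∑ i, (Lf (M i i) / 2 + o)) *
        Real.exp (∑ i, (-(((k : ℝ) + 2) / (k + 3)) *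
          ∑ j, M i j * Real.log (qv (k + 3) M ν i j) -
          ν i * eta k (qv (k + 3) M ν i) / (k + 3)))) := by gcongr
    _ ≤ _ := by
      simp_rw [← Real.exp_add]
      refine Real.exp_le_exp.mpr ?_
      have id := log_identity (d := k + 3) (by omega) hn h
      have sp := sum_split (fun i j => Lf (M i j))
      have sp2 : ∑ q ∈ S, (Lf (M q.1 q.2) + Lf (M q.2 q.1)) = 2 * ∑ q ∈ S, Lf (M q.1 q.2) := by
        rw [Finset.mul_sum]
        exact Finset.sum_congr rfl fun q _ => by rw [h.symm q.2 q.1]; ring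
      have rl : ∑ i, ∑ j, (M i j : ℝ) * (Real.log (pv n ν j) - Real.log (qv (k + 3) M ν i j)) ≤
        ∑ i, - (((k + 3 : ℕ) : ℝ) * ν i * He (qv (k + 3) M ν i) (pv n ν)) :=
        Finset.sum_le_sum fun i _ => row_log (by omega) hn h i
      rw [sp2] at sp
      rw [sp] at id
      have cl := mul_le_mul_of_nonneg_right (card_lt_le (p := p)) ho0
      have rl2 := mul_le_mul_of_nonneg_left rl
        (show (0 : ℝ) ≤ (((k + 3 : ℕ) : ℝ) - 2) / (2 * ((k + 3 : ℕ) : ℝ)) by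
          push_cast
          have : (0 : ℝ) ≤ k := by positivity
          apply div_nonneg <;> linarith)
      rw [← id] at rl2
      have e6 : (((k + 3 : ℕ) : ℝ) - 2) / (2 * ((k + 3 : ℕ) : ℝ)) *
          ∑ i, - (((k + 3 : ℕ) : ℝ) * ν i * He (qv (k + 3) M ν i) (pv n ν)) =
          - ∑ i, (ν i : ℝ) * (((k : ℝ) + 1) / 2 * He (qv (k + 3) M ν i) (pv n ν)) := by
        rw [Finset.mul_sum, ← Finset.sum_neg_distrib]
        refine Finset.sum_congr rfl fun i _ => ?_
        push_cast
        field_simp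
        ring
      rw [e6] at rl2
      have e7 : En k n M ν = ∑ i, (ν i : ℝ) * (((k : ℝ) + 1) / 2 *
          He (qv (k + 3) M ν i) (pv n ν)) + ∑ i, ν i * eta k (qv (k + 3) M ν i) / (k + 3) := by
        unfold En
        rw [← Finset.sum_add_distrib]
        exact Finset.sum_congr rfl fun i _ => by ring
      have e9 : ∑ q ∈ S, (Lf (M q.1 q.2) + o) = ∑ q ∈ S, Lf (M q.1 q.2) + S.card * o := by
        rw [Finset.sum_add_distrib, Finset.sum_const, nsmul_eq_mul]
      have e10 : ∑ i, (Lf (M i i) / 2 + o) = (∑ i, Lf (M i i)) / 2 + p * o := by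
        rw [Finset.sum_add_distrib, Finset.sum_const, nsmul_eq_mul, ← Finset.sum_div,
          Finset.card_univ, ZMod.card]
      rw [e7, Finset.sum_sub_distrib, ← Finset.mul_sum, e9, e10]
      have e8 : ((((k + 3 : ℕ) : ℝ) - 1) / ((k + 3 : ℕ) : ℝ)) = ((k : ℝ) + 2) / (k + 3) := by
        push_cast; ring
      rw [e8] at rl2
      linarith


lemma energy_avg {k n : ℕ} (hn : 0 < n) {M : ZMod p → ZMod p → ℕ} {ν : ZMod p → ℕ}
    (h : Good (k + 3) n M ν) :
    ∑ i, pv n ν i * He (qv (k + 3) M ν i) (pv n ν) ≤ 2 * (En k n M ν / n) ∧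
    eta k (pv n ν) ≤ (6 * (k + 3) + 2 * (20 + 8 * k)) * (En k n M ν / n) := by
  have hn' : (0 : ℝ) < n := by exact_mod_cast hn
  have hk : (0 : ℝ) ≤ k := by positivity
  set H := ∑ i, pv n ν i * He (qv (k + 3) M ν i) (pv n ν) with hH
  set G := ∑ i, pv n ν i * eta k (qv (k + 3) M ν i) with hG
  have hH0 : 0 ≤ H := Finset.sum_nonneg fun i _ => mul_nonneg (pv_nonneg _ _ _) (He_nonneg _ _)
  have hG0 : 0 ≤ G := Finset.sum_nonneg fun i _ => mul_nonneg (pv_nonneg _ _ _)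
    (eta_nonneg _ _ (qv_nonneg _ _ _ _))
  have hE : En k n M ν / n = (k + 1) / 2 * H + G / (k + 3) := by
    unfold En
    rw [hH, hG, Finset.mul_sum, Finset.sum_div, Finset.sum_div, ← Finset.sum_add_distrib]
    refine Finset.sum_congr rfl fun i _ => ?_
    unfold pv
    field_simp
  have h1 : H ≤ 2 * (En k n M ν / n) := by
    rw [hE]
    have : 0 ≤ G / (k + 3) := by positivity
    nlinarith
  have h2 : G ≤ (k + 3) * (En k n M ν / n) := by
    rw [hE]
    have : (k + 3) * (G / (k + 3)) = G := by field_simp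
    rw [mul_add, this]
    have : 0 ≤ ((k : ℝ) + 3) * ((k + 1) / 2 * H) := by positivity
    linarith
  refine ⟨h1, ?_⟩
  have h3 : eta k (pv n ν) ≤ 6 * G + (12 + 8 * (k + 1)) * H := by
    calc eta k (pv n ν) = ∑ i, pv n ν i * eta k (pv n ν) := by
          rw [← Finset.sum_mul, h.pv_sum hn, one_mul]
      _ ≤ ∑ i, (6 * (pv n ν i * eta k (qv (k + 3) M ν i)) +
          (12 + 8 * (k + 1)) * (pv n ν i * He (qv (k + 3) M ν i) (pv n ν))) := by
          refine Finset.sum_le_sum fun i _ => ?_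
          rcases Nat.eq_zero_or_pos (ν i) with h0 | h0
          · simp [pv, h0]
          · have := eta_compare k (qv (k + 3) M ν i) (pv n ν) (qv_nonneg _ _ _ _)
              (h.qv_sum (by omega) h0) (pv_nonneg _ _) (h.pv_sum hn)
            have := mul_le_mul_of_nonneg_left this (pv_nonneg n ν i)
            linarith
      _ = _ := by rw [Finset.sum_add_distrib, ← Finset.mul_sum, ← Finset.mul_sum]
  nlinarith

lemma X_bound {d n : ℕ} (hd : 0 < d) (hn : 0 < n) {M : ZMod p → ZMod p → ℕ} {ν : ZMod p → ℕ}
    (h : Good d n M ν) :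
    ∑ i, ∑ j, (√((M i j : ℝ) / (d * n)) - 1 / p) ^ 2 ≤
      3 * ∑ i, pv n ν i * He (qv d M ν i) (pv n ν) + 6 * Hu (pv n ν) := by
  have hn' : (0 : ℝ) < n := by exact_mod_cast hn
  have hd' : (0 : ℝ) < d := by exact_mod_cast hd
  have hp' : (0 : ℝ) < p := p_pos'
  have hsp : (0 : ℝ) < √p := Real.sqrt_pos.mpr hp'
  have hss : √(p : ℝ) * √p = p := Real.mul_self_sqrt hp'.le
  have e1 : ∀ i j, √((M i j : ℝ) / (d * n)) = √(pv n ν i) * √(qv d M ν i j) := by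
    intro i j
    rw [← Real.sqrt_mul (pv_nonneg _ _ _)]
    congr 1
    unfold pv qv
    rcases Nat.eq_zero_or_pos (ν i) with h0 | h0
    · have : M i j = 0 := by
        by_contra hne
        have := (h.M_pos (Nat.pos_of_ne_zero hne)).1
        omega
      simp [this]
    · have : (0 : ℝ) < ν i := by exact_mod_cast h0
      field_simp
  have e2 : ∀ i j, (√((M i j : ℝ) / (d * n)) - 1 / p) ^ 2 ≤
      3 * (pv n ν i * (√(qv d M ν i j) - √(pv n ν j)) ^ 2) +
      3 * (pv n ν i * (√(pv n ν j) - 1 / √p) ^ 2) + 3 * (1 / p * (√(pv n ν i) - 1 / √p) ^ 2) := by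
    intro i j
    rw [e1]
    set a := √(pv n ν i)
    have ha : pv n ν i = a ^ 2 := (Real.sq_sqrt (pv_nonneg _ _ _)).symm
    set u := √(qv d M ν i j)
    set v := √(pv n ν j)
    have hw : (1 : ℝ) / p = (1 / √p) ^ 2 := by rw [div_pow, one_pow, Real.sq_sqrt hp'.le]
    set w := 1 / √(p : ℝ)
    rw [ha, hw]
    have e : a * u - w ^ 2 = a * (u - v) + a * (v - w) + w * (a - w) := by ring
    rw [e]
    nlinarith [sq_nonneg (a * (u - v) - a * (v - w)), sq_nonneg (a * (u - v) - w * (a - w)),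
      sq_nonneg (a * (v - w) - w * (a - w))]
  calc _ ≤ ∑ i, ∑ j, (3 * (pv n ν i * (√(qv d M ν i j) - √(pv n ν j)) ^ 2) +
      3 * (pv n ν i * (√(pv n ν j) - 1 / √p) ^ 2) + 3 * (1 / p * (√(pv n ν i) - 1 / √p) ^ 2)) :=
        Finset.sum_le_sum fun i _ => Finset.sum_le_sum fun j _ => e2 i j
    _ = ∑ i, (3 * (pv n ν i * He (qv d M ν i) (pv n ν)) + 3 * (pv n ν i * Hu (pv n ν)) +
        3 * (√(pv n ν i) - 1 / √p) ^ 2) := by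
        refine Finset.sum_congr rfl fun i _ => ?_
        unfold He Hu
        rw [Finset.sum_add_distrib, Finset.sum_add_distrib, Finset.sum_const, Finset.card_univ,
          ZMod.card, nsmul_eq_mul, ← Finset.mul_sum, ← Finset.mul_sum, ← Finset.mul_sum,
          ← Finset.mul_sum]
        congr 1
        field_simp
    _ = _ := by
        rw [Finset.sum_add_distrib, Finset.sum_add_distrib, ← Finset.mul_sum, ← Finset.mul_sum,
          ← Finset.sum_mul, h.pv_sum hn, ← Finset.mul_sum]
        unfold Hu
        ring

lemma D_bound {r : ZMod p → ZMod p → ℝ} (hr : ∀ i j, 0 ≤ r i j)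
    (hX : ∑ i, ∑ j, (√(r i j) - 1 / p) ^ 2 < 1 / (p : ℝ) ^ 2) :
    ∑ i, ∑ j, (r i j - 1 / (p : ℝ) ^ 2) ^ 2 ≤
      9 / (p : ℝ) ^ 2 * ∑ i, ∑ j, (√(r i j) - 1 / p) ^ 2 := by
  have hp' : (0 : ℝ) < p := p_pos'
  rw [Finset.mul_sum]
  refine Finset.sum_le_sum fun i _ => ?_
  rw [Finset.mul_sum]
  refine Finset.sum_le_sum fun j _ => ?_
  have h1 : (√(r i j) - 1 / p) ^ 2 ≤ ∑ i, ∑ j, (√(r i j) - 1 / p) ^ 2 := by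
    calc (√(r i j) - 1 / p) ^ 2 ≤ ∑ j, (√(r i j) - 1 / p) ^ 2 :=
          Finset.single_le_sum (f := fun j => (√(r i j) - 1 / p) ^ 2)
            (fun _ _ => sq_nonneg _) (mem_univ j)
      _ ≤ _ := Finset.single_le_sum (f := fun i => ∑ j, (√(r i j) - 1 / p) ^ 2)
            (fun _ _ => Finset.sum_nonneg fun _ _ => sq_nonneg _) (mem_univ i)
  have h2 : (√(r i j) - 1 / p) ^ 2 < (1 / (p : ℝ)) ^ 2 := by
    rw [div_pow, one_pow]; linarith
  have h3 := abs_lt.mp (abs_lt_of_sq_lt_sq h2 (by positivity))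
  have h4 : (√(r i j) + 1 / p) ^ 2 ≤ 9 / (p : ℝ) ^ 2 := by
    have : √(r i j) + 1 / p ≤ 3 / p := by
      have : (3 : ℝ) / p = 1 / p + 1 / p + 1 / p := by ring
      linarith [h3.2]
    have h0 : 0 ≤ √(r i j) + 1 / p := by positivity
    calc (√(r i j) + 1 / p) ^ 2 ≤ (3 / (p : ℝ)) ^ 2 := pow_le_pow_left₀ h0 this 2
      _ = _ := by rw [div_pow]; norm_num
  have e : (r i j - 1 / (p : ℝ) ^ 2) ^ 2 = (√(r i j) + 1 / p) ^ 2 * (√(r i j) - 1 / p) ^ 2 := by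
    rw [← mul_pow]
    congr 1
    have := Real.sq_sqrt (hr i j)
    have e2 : (1 : ℝ) / (p : ℝ) ^ 2 = (1 / p) ^ 2 := by rw [div_pow, one_pow]
    rw [e2]
    linear_combination -this
  rw [e]
  exact mul_le_mul_of_nonneg_right h4 (sq_nonneg _)

lemma energy (k : ℕ) (c0 : ℝ) (hc0 : 0 < c0) : ∃ c1 : ℝ, 0 < c1 ∧
    ∀ (p : ℕ) [Fact p.Prime], ¬ p ∣ k + 3 → ∀ n : ℕ, 0 < n →
    ∀ (M : ZMod p → ZMod p → ℕ) (ν : ZMod p → ℕ), Good (k + 3) n M ν →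
    c0 * n < (p : ℝ) ^ 2 * ((n : ℝ) - ν 0) → ∀ T : ℝ,
    T < ∑ i : ZMod p, ∑ j : ZMod p,
      ((M i j : ℝ) / (((k + 3 : ℕ) : ℝ) * n) - 1 / (p : ℝ) ^ 2) ^ 2 →
    c1 * n / (p : ℝ) ^ 2 ≤ En k n M ν ∨ c1 * (p : ℝ) ^ 2 * n * T ≤ En k n M ν := by
  obtain ⟨c, hc, tri⟩ := trichotomy k
  set K : ℝ := 6 * (k + 3) + 2 * (20 + 8 * k) with hK
  have hK0 : 0 < K := by positivity
  set K2 : ℝ := 6 + 6 * K / c with hK2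
  have hK20 : 0 < K2 := by positivity
  refine ⟨min (min (c / K) (c * c0 / K)) (min (1 / K2) (1 / (9 * K2))), by positivity, ?_⟩
  intro p _ hpd n hn M ν h hs T hT
  set c1 := min (min (c / K) (c * c0 / K)) (min (1 / K2) (1 / (9 * K2))) with hc1
  have l1 : c1 ≤ c / K := (min_le_left _ _).trans (min_le_left _ _)
  have l2 : c1 ≤ c * c0 / K := (min_le_left _ _).trans (min_le_right _ _)
  have l3 : c1 ≤ 1 / K2 := (min_le_right _ _).trans (min_le_left _ _)
  have l4 : c1 ≤ 1 / (9 * K2) := (min_le_right _ _).trans (min_le_right _ _)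
  have hc10 : 0 < c1 := by positivity
  clear_value c1
  have hn' : (0 : ℝ) < n := by exact_mod_cast hn
  have hp' : (0 : ℝ) < p := p_pos'
  obtain ⟨a1, a2⟩ := energy_avg hn h
  set E := En k n M ν / n with hE
  have hEn : En k n M ν = n * E := by rw [hE]; field_simp
  rw [hEn]
  have mkA : ∀ x : ℝ, c1 ≤ x → x / (p : ℝ) ^ 2 ≤ E → c1 * n / (p : ℝ) ^ 2 ≤ n * E := by
    intro x hx hxE
    calc c1 * n / (p : ℝ) ^ 2 ≤ x * n / (p : ℝ) ^ 2 := by gcongr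
      _ = n * (x / (p : ℝ) ^ 2) := by ring
      _ ≤ n * E := by gcongr
  rcases tri p hpd (pv n ν) (pv_nonneg _ _) (h.pv_sum hn) with t | t | t
  · left
    refine mkA _ l1 ?_
    rw [div_div, div_le_iff₀ (by positivity)]
    have := mul_le_mul_of_nonneg_left a2 (sq_nonneg (p : ℝ))
    linarith
  · left
    refine mkA _ l2 ?_
    rw [div_div, div_le_iff₀ (by positivity)]
    have h1 : c0 ≤ (p : ℝ) ^ 2 * (1 - pv n ν 0) := by
      have : (p : ℝ) ^ 2 * (1 - pv n ν 0) = (p : ℝ) ^ 2 * ((n : ℝ) - ν 0) / n := by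
        unfold pv; field_simp
      rw [this, le_div_iff₀ hn']
      exact hs.le
    calc c * c0 ≤ c * ((p : ℝ) ^ 2 * (1 - pv n ν 0)) := by gcongr
      _ = (p : ℝ) ^ 2 * (c * (1 - pv n ν 0)) := by ring
      _ ≤ (p : ℝ) ^ 2 * (K * E) := mul_le_mul_of_nonneg_left (t.trans a2) (by positivity)
      _ = _ := by ring
  · have hX := X_bound (d := k + 3) (by omega) hn h
    set X := ∑ i, ∑ j, (√((M i j : ℝ) / (((k + 3 : ℕ) : ℝ) * n)) - 1 / (p : ℝ)) ^ 2 with hXd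
    have hHu : Hu (pv n ν) ≤ K * E / c := by
      rw [le_div_iff₀ hc]; linarith [t.trans a2]
    have hXE : X ≤ K2 * E := by
      have : K2 * E = 6 * E + 6 * (K * E / c) := by rw [hK2]; ring
      linarith
    rcases le_or_gt (1 / (p : ℝ) ^ 2) X with hx | hx
    · left
      refine mkA _ l3 ?_
      rw [div_div, div_le_iff₀ (by positivity)]
      have h2 := hx.trans hXE
      rw [div_le_iff₀ (by positivity)] at h2
      linarith
    · right
      have hD := D_bound (p := p) (r := fun i j => (M i j : ℝ) / (((k + 3 : ℕ) : ℝ) * n))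
        (fun i j => by positivity) hx
      have hT2 : T ≤ 9 / (p : ℝ) ^ 2 * (K2 * E) := by
        refine hT.le.trans (hD.trans ?_)
        gcongr
      rcases le_or_gt T 0 with h0 | h0
      · have hE0 : 0 ≤ E := by
          have : 0 ≤ X := Finset.sum_nonneg fun _ _ => Finset.sum_nonneg fun _ _ => sq_nonneg _
          by_contra hneg
          push Not at hneg
          have := mul_neg_of_pos_of_neg hK20 hneg
          linarith
        have : c1 * (p : ℝ) ^ 2 * n * T ≤ 0 := mul_nonpos_of_nonneg_of_nonpos (by positivity) h0
        have : 0 ≤ n * E := by positivity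
        linarith
      · calc c1 * (p : ℝ) ^ 2 * n * T ≤ 1 / (9 * K2) * (p : ℝ) ^ 2 * n * T := by gcongr
          _ ≤ 1 / (9 * K2) * (p : ℝ) ^ 2 * n * (9 / (p : ℝ) ^ 2 * (K2 * E)) := by gcongr
          _ = n * E := by field_simp


lemma card_bound {n : ℕ} (B : ℕ) (T : Finset (ZMod p → ZMod p → ℕ))
    (hT : ∀ M ∈ T, ∀ i j, M i j ≤ B) : (T.card : ℝ) ≤ ((B : ℝ) + 1) ^ (p ^ 2) := by
  have h1 : T ⊆ Fintype.piFinset (fun _ : ZMod p => Fintype.piFinset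
      (fun _ : ZMod p => Finset.range (B + 1))) := by
    intro M hM
    simp only [Fintype.mem_piFinset, Finset.mem_range]
    exact fun i j => Nat.lt_succ_of_le (hT M hM i j)
  have h2 := Finset.card_le_card h1
  simp only [Fintype.card_piFinset, Finset.card_range, Finset.prod_const, Finset.card_univ,
    ZMod.card] at h2
  rw [← pow_mul, ← sq] at h2
  exact_mod_cast h2

lemma regimeB (k : ℕ) (c0 : ℝ) (hc0 : 0 < c0) : ∃ b0 : ℝ, 0 < b0 ∧ ∀ b : ℝ, b0 ≤ b →
    ∃ N : ℕ, 0 < N ∧ ∀ n : ℕ, N ≤ n → Even (n * (k + 3)) →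
    ∀ (p : ℕ) [Fact p.Prime], ¬ p ∣ k + 3 → (p : ℝ) ≤ (n : ℝ) ^ ((1 : ℝ) / 5) →
    ∀ (T : Finset (ZMod p → ZMod p → ℕ)) (nu : (ZMod p → ZMod p → ℕ) → ZMod p → ℕ),
    (∀ M ∈ T, Good (k + 3) n M (nu M) ∧ c0 * n < (p : ℝ) ^ 2 * ((n : ℝ) - nu M 0) ∧
      b * Real.log n / n < ∑ i : ZMod p, ∑ j : ZMod p,
      ((M i j : ℝ) / (((k + 3 : ℕ) : ℝ) * n) - 1 / (p : ℝ) ^ 2) ^ 2) →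
    ∑ M ∈ T, pre (k + 3) n * wt (k + 3) n M (nu M) ≤ 1 / (n : ℝ) ^ (k + 1) := by
  obtain ⟨c1, hc1, hen⟩ := energy k c0 hc0
  refine ⟨(13 + k) / c1, by positivity, fun b hb => ?_⟩
  have hlo := (isLittleO_log_rpow_atTop (r := (1 : ℝ) / 5) (by norm_num)).bound
    (show (0 : ℝ) < c1 / (13 + k) by positivity)
  have hlo2 := tendsto_natCast_atTop_atTop.eventually hlo
  obtain ⟨N1, hN1⟩ := Filter.eventually_atTop.mp hlo2
  refine ⟨max N1 (6 * (k + 3)), by positivity, fun n hn hev p _ hpd hpn T nu hT => ?_⟩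
  have hnN1 : N1 ≤ n := (le_max_left _ _).trans hn
  have hnd : 6 * (k + 3) ≤ n := (le_max_right _ _).trans hn
  have hn0 : 0 < n := by omega
  have hn' : (0 : ℝ) < n := by exact_mod_cast hn0
  have hn1 : (1 : ℝ) ≤ n := by exact_mod_cast hn0
  have hp' : (0 : ℝ) < p := p_pos'
  have hp1 : (1 : ℝ) ≤ p := by exact_mod_cast (Fact.out : p.Prime).one_lt.le
  set l := Real.log n with hl
  have hl0 : 0 ≤ l := Real.log_nonneg hn1
  have hlog : l ≤ c1 / (13 + k) * (n : ℝ) ^ ((1 : ℝ) / 5) := by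
    have := hN1 n hnN1
    rw [Real.norm_of_nonneg hl0, Real.norm_of_nonneg (by positivity)] at this
    exact this
  set o := 1 + Real.log ((((k + 3) * n : ℕ) : ℝ) + 1) with ho
  have ho3 : o ≤ 3 * l := by
    have e1 : (1 : ℝ) = Real.log (Real.exp 1) := by simp
    have : o = Real.log (Real.exp 1 * ((((k + 3) * n : ℕ) : ℝ) + 1)) := by
      rw [Real.log_mul (Real.exp_pos 1).ne' (by positivity), ← e1]
    rw [this, hl]
    have e2 : 3 * Real.log n = Real.log ((n : ℝ) ^ 3) := by rw [Real.log_pow]; norm_num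
    rw [e2]
    refine Real.log_le_log (by positivity) ?_
    have h3 : Real.exp 1 ≤ 3 := by linarith [Real.exp_one_lt_d9]
    have hnd' : (6 : ℝ) * (k + 3) ≤ n := by exact_mod_cast hnd
    have hk : (0 : ℝ) ≤ k := by positivity
    have h6 : ((((k + 3) * n : ℕ) : ℝ) + 1) ≤ 2 * (k + 3) * n := by
      push_cast; nlinarith
    calc Real.exp 1 * ((((k + 3) * n : ℕ) : ℝ) + 1) ≤ 3 * (2 * (k + 3) * n) := by gcongr
      _ = (6 * (k + 3)) * n := by ring
      _ ≤ n * n := by gcongr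
      _ ≤ n * n * n := le_mul_of_one_le_right (by positivity) hn1
      _ = n ^ 3 := by ring
  have term : ∀ M ∈ T, pre (k + 3) n * wt (k + 3) n M (nu M) ≤
      Real.exp (- ((k + 1 : ℝ) + 3 * (p : ℝ) ^ 2) * l) := by
    intro M hM
    obtain ⟨hg, hs, hd⟩ := hT M hM
    refine (term_bound hn0 hev hg).trans (Real.exp_le_exp.mpr ?_)
    have hEn : (13 + k) * (p : ℝ) ^ 2 * l ≤ En k n M (nu M) := by
      rcases hen p hpd n hn0 M (nu M) hg hs _ hd with h | h
      · refine le_trans ?_ h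
        rw [le_div_iff₀ (by positivity)]
        set w := (n : ℝ) ^ ((1 : ℝ) / 5) with hw
        have hw0 : 0 < w := by positivity
        have hw5 : w ^ 5 = n := by
          rw [hw, ← Real.rpow_natCast, ← Real.rpow_mul hn'.le]; norm_num
        calc (13 + k) * (p : ℝ) ^ 2 * l * (p : ℝ) ^ 2 = (13 + k) * (p : ℝ) ^ 4 * l := by ring
          _ ≤ (13 + k) * w ^ 4 * (c1 / (13 + k) * w) := by gcongr
          _ = c1 * w ^ 5 := by field_simp
          _ = c1 * n := by rw [hw5]
      · refine le_trans ?_ h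
        have hb' : (13 + k) ≤ c1 * b := by
          rw [div_le_iff₀ hc1] at hb; linarith
        calc (13 + k) * (p : ℝ) ^ 2 * l ≤ (c1 * b) * (p : ℝ) ^ 2 * l := by gcongr
          _ = _ := by rw [hl]; field_simp
    have h1 : 3 * (p : ℝ) ^ 2 * o ≤ 3 * (p : ℝ) ^ 2 * (3 * l) := by gcongr
    have hp2 : 1 ≤ (p : ℝ) ^ 2 := one_le_pow₀ hp1
    have h2 : (k + 1 : ℝ) * l ≤ (k + 1) * (p : ℝ) ^ 2 * l := by
      have : (k + 1 : ℝ) * 1 ≤ (k + 1) * (p : ℝ) ^ 2 := by gcongr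
      have := mul_le_mul_of_nonneg_right this hl0
      linarith
    linarith
  have hcard : (T.card : ℝ) ≤ Real.exp (3 * (p : ℝ) ^ 2 * l) := by
    refine (card_bound (n := n) ((k + 3) * n) T (fun M hM i j => (hT M hM).1.le i j)).trans ?_
    rw [← Real.exp_log (show (0 : ℝ) < ((((k + 3) * n : ℕ) : ℝ) + 1) by positivity),
      ← Real.exp_nat_mul]
    refine Real.exp_le_exp.mpr ?_
    push_cast at ho ho3 ⊢
    have : Real.log (((k : ℝ) + 3) * n + 1) ≤ 3 * l := by linarith
    calc (p : ℝ) ^ 2 * Real.log (((k : ℝ) + 3) * n + 1) ≤ (p : ℝ) ^ 2 * (3 * l) := by gcongr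
      _ = _ := by ring
  calc _ ≤ ∑ M ∈ T, Real.exp (- ((k + 1 : ℝ) + 3 * (p : ℝ) ^ 2) * l) := Finset.sum_le_sum term
    _ = T.card * Real.exp (- ((k + 1 : ℝ) + 3 * (p : ℝ) ^ 2) * l) := by
        rw [Finset.sum_const, nsmul_eq_mul]
    _ ≤ Real.exp (3 * (p : ℝ) ^ 2 * l) * Real.exp (- ((k + 1 : ℝ) + 3 * (p : ℝ) ^ 2) * l) := by
        gcongr
    _ = Real.exp (- (((k + 1 : ℕ) : ℝ) * l)) := by
        rw [← Real.exp_add]; congr 1; push_cast; ring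
    _ = _ := by
        rw [Real.exp_neg, Real.exp_nat_mul, hl, Real.exp_log hn', one_div]


lemma poisson {ι : Type*} [Fintype ι] [DecidableEq ι] {α : Type*} (T : Finset α)
    (κ : α → ι → ℕ) (hinj : Set.InjOn κ T) (y : ι → ℝ) (hy : ∀ q, 0 ≤ y q) :
    ∑ x ∈ T, ∏ q, y q ^ κ x q / ((κ x q).factorial : ℝ) ≤ Real.exp (∑ q, y q) := by
  classical
  rw [← Finset.sum_image (f := fun k : ι → ℕ => ∏ q, y q ^ k q / ((k q).factorial : ℝ)) hinj]
  set T' := T.image κ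
  set B := T'.sup (fun k => ∑ q, k q) with hB
  have hsub : T' ⊆ Fintype.piFinset (fun _ : ι => Finset.range (B + 1)) := by
    intro k hk
    simp only [Fintype.mem_piFinset, Finset.mem_range]
    intro q
    refine Nat.lt_succ_of_le ?_
    calc k q ≤ ∑ q, k q := Finset.single_le_sum (fun _ _ => Nat.zero_le _) (mem_univ q)
      _ ≤ B := Finset.le_sup (f := fun k : ι → ℕ => ∑ q, k q) hk
  calc _ ≤ ∑ k ∈ Fintype.piFinset (fun _ : ι => Finset.range (B + 1)),
        ∏ q, y q ^ k q / ((k q).factorial : ℝ) := by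
        refine Finset.sum_le_sum_of_subset_of_nonneg hsub fun k _ _ => ?_
        exact Finset.prod_nonneg fun q _ => div_nonneg (pow_nonneg (hy q) _) (by positivity)
    _ = ∏ q, ∑ m ∈ Finset.range (B + 1), y q ^ m / (m.factorial : ℝ) := by
        rw [Finset.prod_univ_sum]
    _ ≤ ∏ q, Real.exp (y q) := by
        refine Finset.prod_le_prod (fun q _ => ?_) fun q _ => Real.sum_le_exp_of_nonneg (hy q) _
        exact Finset.sum_nonneg fun m _ => div_nonneg (pow_nonneg (hy q) _) (by positivity)
    _ = _ := by rw [Real.exp_sum]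

lemma ratio_bound (h0 t : ℕ) (x : ℝ) (hx : 0 < x) (hx2 : x ≤ 2 * h0) :
    (2 : ℝ) ^ (h0 + t) * ((h0 + t).factorial : ℝ) / ((2 * (h0 + t)).factorial : ℝ) *
      (((2 * h0).factorial : ℝ) / (2 ^ h0 * (h0.factorial : ℝ))) ≤ (1 / x) ^ t := by
  induction t with
  | zero =>
    have h1 : (0 : ℝ) < h0.factorial := by exact_mod_cast Nat.factorial_pos _
    have h2 : (0 : ℝ) < (2 * h0).factorial := by exact_mod_cast Nat.factorial_pos _
    refine le_of_eq ?_
    simp only [add_zero, pow_zero]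
    field_simp
  | succ t ih =>
    set m := h0 + t with hm
    have e1 : h0 + (t + 1) = m + 1 := by omega
    rw [e1]
    have e2 : 2 * (m + 1) = (2 * m + 1) + 1 := by ring
    rw [e2, Nat.factorial_succ (2 * m + 1), Nat.factorial_succ (2 * m), Nat.factorial_succ m]
    have h1 : (0 : ℝ) < h0.factorial := by exact_mod_cast Nat.factorial_pos _
    have h2 : (0 : ℝ) < (2 * m).factorial := by exact_mod_cast Nat.factorial_pos _
    have h3 : (0 : ℝ) < m.factorial := by exact_mod_cast Nat.factorial_pos _
    have h4 : (1 : ℝ) / (2 * m + 1) ≤ 1 / x := by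
      refine one_div_le_one_div_of_le hx ?_
      have : (h0 : ℝ) ≤ m := by exact_mod_cast Nat.le_add_right _ _
      linarith
    calc _ = ((2 : ℝ) ^ m * (m.factorial : ℝ) / ((2 * m).factorial : ℝ) *
      (((2 * h0).factorial : ℝ) / (2 ^ h0 * (h0.factorial : ℝ)))) * (1 / (2 * m + 1)) := by
          push_cast
          field_simp
          ring
      _ ≤ (1 / x) ^ t * (1 / x) := by gcongr
      _ = _ := by rw [pow_succ]

lemma Zs_le_pow (d : ℕ) (x : ZMod p → ℝ) (hx : ∀ j, 0 ≤ x j) : Zs d x ≤ (∑ j, x j) ^ d := by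
  unfold Zs
  rw [Fintype.sum_pow]
  refine Finset.sum_le_sum fun a _ => ?_
  split_ifs
  · exact le_rfl
  · exact Finset.prod_nonneg fun _ _ => hx _

lemma row_bound2 (d ν : ℕ) (m : ZMod p → ℕ) (hm : ∑ j, m j = d * ν) :
    (Ncount d ν m : ℝ) * ∏ j, ((m j).factorial : ℝ) ≤ ((d : ℝ) * ν) ^ (d * ν) := by
  have h := gf d ν m (fun j => (m j : ℝ)) (fun j => by positivity)
  have h2 : ∏ j, ((m j).factorial : ℝ) ≤ ∏ j, (m j : ℝ) ^ m j := by
    refine Finset.prod_le_prod (fun j _ => by positivity) fun j _ => ?_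
    exact_mod_cast Nat.factorial_le_pow (m j)
  calc _ ≤ (Ncount d ν m : ℝ) * ∏ j, (m j : ℝ) ^ m j := by gcongr
    _ ≤ _ := h
    _ ≤ ((∑ j, (m j : ℝ)) ^ d) ^ ν := by
        exact pow_le_pow_left₀ (Zs_nonneg _ _ (fun j => by positivity))
          (Zs_le_pow _ _ (fun j => by positivity)) _
    _ = _ := by
        rw [← pow_mul]
        congr 1
        exact_mod_cast hm

lemma Zs_sparse (d : ℕ) (z : ZMod p → ℝ) (ζ : ℝ) (hz : ∀ j, 0 ≤ z j) (hz0 : z 0 = 1)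
    (hζ : ∑ j, z j = 1 + ζ) (hζ0 : 0 ≤ ζ) (hζ1 : ζ ≤ 1) :
    Zs d z ≤ 1 + d ^ 2 * 2 ^ d * ζ ^ 2 := by
  classical
  -- modified weights
  let w : Fin d → Fin d → Fin d → ZMod p → ℝ := fun r r' t x =>
    if (t = r ∨ t = r') ∧ x = 0 then 0 else z x
  have hw0 : ∀ r r' t x, 0 ≤ w r r' t x := by
    intro r r' t x; simp only [w]; split_ifs
    · exact le_rfl
    · exact hz x
  have pt : ∀ a : Fin d → ZMod p, (if ∑ r, a r = 0 then ∏ r, z (a r) else 0) ≤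
      (if a = 0 then 1 else 0) + ∑ r, ∑ r', if r ≠ r' then ∏ t, w r r' t (a t) else 0 := by
    intro a
    have nn : 0 ≤ ∑ r, ∑ r', if r ≠ r' then ∏ t, w r r' t (a t) else 0 := by
      refine Finset.sum_nonneg fun r _ => Finset.sum_nonneg fun r' _ => ?_
      split_ifs
      · exact Finset.prod_nonneg fun t _ => hw0 _ _ _ _
      · exact le_rfl
    by_cases h0 : a = 0
    · subst h0
      simp only [Pi.zero_apply, Finset.sum_const_zero, if_true, hz0, Finset.prod_const_one] at nn ⊢
      linarith
    · rw [if_neg h0, zero_add]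
      by_cases hs : ∑ r, a r = 0
      · rw [if_pos hs]
        obtain ⟨r, hr⟩ : ∃ r, a r ≠ 0 := by
          by_contra hcon; push Not at hcon; exact h0 (funext hcon)
        obtain ⟨r', hrr, hr'⟩ : ∃ r', r' ≠ r ∧ a r' ≠ 0 := by
          by_contra hcon
          push Not at hcon
          rw [Finset.sum_eq_single r (fun b _ hb => hcon b hb) (by simp)] at hs
          exact hr hs
        have e : ∏ t, z (a t) = ∏ t, w r r' t (a t) := by
          refine Finset.prod_congr rfl fun t _ => ?_
          simp only [w]
          rw [if_neg]
          rintro ⟨rfl | rfl, h⟩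
          · exact hr h
          · exact hr' h
        rw [e]
        calc _ = (if r ≠ r' then ∏ t, w r r' t (a t) else 0) := by rw [if_pos hrr.symm]
          _ ≤ ∑ r', (if r ≠ r' then ∏ t, w r r' t (a t) else 0) :=
            Finset.single_le_sum (f := fun r' => if r ≠ r' then ∏ t, w r r' t (a t) else 0)
              (fun r' _ => by
                split_ifs
                · exact Finset.prod_nonneg fun t _ => hw0 _ _ _ _
                · exact le_rfl) (mem_univ r')
          _ ≤ _ := Finset.single_le_sum
              (f := fun r => ∑ r', (if r ≠ r' then ∏ t, w r r' t (a t) else 0))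
              (fun r _ => Finset.sum_nonneg fun r' _ => by
                split_ifs
                · exact Finset.prod_nonneg fun t _ => hw0 _ _ _ _
                · exact le_rfl) (mem_univ r)
      · rw [if_neg hs]; exact nn
  have sw : ∀ r r' t, ∑ x, w r r' t x ≤
      (if t = r then ζ else 1) * (if t = r' then ζ else 1) * 2 ∨ r = r' := by
    intro r r' t
    by_cases hrr : r = r'
    · right; exact hrr
    left
    by_cases ht : t = r ∨ t = r'
    · have e : ∑ x, w r r' t x = ζ := by
        have : ∀ x, w r r' t x = z x - if x = 0 then 1 else 0 := by
          intro x
          simp only [w, ht, true_and]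
          split_ifs with hx
          · rw [hx, hz0]; ring
          · ring
        simp_rw [this]
        rw [Finset.sum_sub_distrib, hζ]
        simp
      rw [e]
      rcases ht with rfl | rfl
      · rw [if_pos rfl, if_neg hrr]; linarith
      · rw [if_pos rfl, if_neg (Ne.symm hrr)]; linarith
    · have e : ∑ x, w r r' t x = 1 + ζ := by
        rw [← hζ]
        refine Finset.sum_congr rfl fun x _ => ?_
        simp only [w, ht, false_and, if_false]
      rw [e]
      push Not at ht
      rw [if_neg ht.1, if_neg ht.2]; linarith
  have pr : ∀ r r', (∑ a : Fin d → ZMod p, if r ≠ r' then ∏ t, w r r' t (a t) else 0) ≤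
      2 ^ d * ζ ^ 2 := by
    intro r r'
    by_cases hrr : r = r'
    · simp only [hrr, ne_eq, not_true_eq_false, if_false, Finset.sum_const_zero]; positivity
    · simp only [ne_eq, hrr, not_false_eq_true, if_true]
      rw [← Fintype.piFinset_univ, ← Finset.prod_univ_sum (fun _ => univ) (w r r')]
      calc _ ≤ ∏ t : Fin d, ((if t = r then ζ else 1) * (if t = r' then ζ else 1) * 2) := by
            refine Finset.prod_le_prod (fun t _ => Finset.sum_nonneg fun x _ => hw0 _ _ _ _)
              fun t _ => ?_
            exact (sw r r' t).resolve_right hrr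
        _ = _ := by
            rw [Finset.prod_mul_distrib, Finset.prod_mul_distrib]
            simp
            ring
  calc Zs d z ≤ ∑ a : Fin d → ZMod p, ((if a = 0 then 1 else 0) +
        ∑ r, ∑ r', if r ≠ r' then ∏ t, w r r' t (a t) else 0) := Finset.sum_le_sum fun a _ => pt a
    _ = 1 + ∑ r, ∑ r', ∑ a : Fin d → ZMod p, (if r ≠ r' then ∏ t, w r r' t (a t) else 0) := by
        rw [Finset.sum_add_distrib, Finset.sum_comm]
        congr 1
        · simp
        · refine Finset.sum_congr rfl fun r _ => ?_
          rw [Finset.sum_comm]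
    _ ≤ 1 + ∑ r : Fin d, ∑ r' : Fin d, 2 ^ d * ζ ^ 2 := by
        gcongr with r _ r' _
        exact pr r r'
    _ = _ := by simp; ring


/-- row sums away from zero -/
def nz (ν : ZMod p → ℕ) (i : ZMod p) : ℕ := if i = 0 then 0 else ν i

/-- matrix away from row and column zero -/
def mm (M : ZMod p → ZMod p → ℕ) (i j : ZMod p) : ℕ := if i = 0 ∨ j = 0 then 0 else M i j

/-- the ordered pairs -/
def Plt (p : ℕ) [Fact p.Prime] : Finset (ZMod p × ZMod p) :=
  Finset.univ.filter (fun q : ZMod p × ZMod p => q.1.val < q.2.val)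

lemma Plt_snd {q : ZMod p × ZMod p} (hq : q ∈ Plt p) : q.2 ≠ 0 := by
  intro h
  have := (Finset.mem_filter.mp hq).2
  rw [h, ZMod.val_zero] at this
  omega

lemma prod_zero_split {α : Type*} [CommMonoid α] (g : ZMod p → α) :
    ∏ i, g i = g 0 * ∏ i, (if i = 0 then 1 else g i) := by
  rw [← Finset.mul_prod_erase univ g (mem_univ 0),
    ← Finset.mul_prod_erase univ (fun i => if i = 0 then 1 else g i) (mem_univ 0)]
  rw [if_pos rfl, one_mul]
  congr 1
  refine Finset.prod_congr rfl fun i hi => ?_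
  rw [if_neg (Finset.ne_of_mem_erase hi)]

lemma sum_zero_split {α : Type*} [AddCommMonoid α] (g : ZMod p → α) :
    ∑ i, g i = g 0 + ∑ i, (if i = 0 then 0 else g i) :=
  prod_zero_split (α := Multiplicative α) g

lemma prod_Plt_split {α : Type*} [CommMonoid α] (g : ZMod p → ZMod p → α) :
    ∏ q ∈ Plt p, g q.1 q.2 = (∏ j, if j = 0 then 1 else g 0 j) *
      ∏ q ∈ Plt p, (if q.1 = 0 ∨ q.2 = 0 then 1 else g q.1 q.2) := by
  have h1 : ∏ q ∈ Plt p, g q.1 q.2 = (∏ q ∈ Plt p, if q.1 = 0 then g q.1 q.2 else 1) *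
      ∏ q ∈ Plt p, (if q.1 = 0 ∨ q.2 = 0 then 1 else g q.1 q.2) := by
    rw [← Finset.prod_mul_distrib]
    refine Finset.prod_congr rfl fun q hq => ?_
    have := Plt_snd hq
    by_cases h : q.1 = 0 <;> simp [h, this]
  rw [h1]
  congr 1
  rw [← Finset.prod_filter]
  have h2 : (∏ j, if j = 0 then 1 else g 0 j) = ∏ j ∈ univ.filter (fun j : ZMod p => j ≠ 0), g 0 j := by
    rw [Finset.prod_filter]
    refine Finset.prod_congr rfl fun j _ => ?_
    by_cases h : j = 0 <;> simp [h]
  rw [h2]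
  refine Finset.prod_bij' (fun q _ => q.2) (fun j _ => (0, j)) ?_ ?_ ?_ ?_ ?_
  · intro q hq
    have := Plt_snd (Finset.mem_filter.mp hq).1
    simpa using this
  · intro j hj
    have hj' : j ≠ 0 := (Finset.mem_filter.mp hj).2
    simp only [Plt, Finset.mem_filter, mem_univ, true_and, and_true, ZMod.val_zero]
    exact Nat.pos_of_ne_zero ((ZMod.val_ne_zero j).mpr hj')
  · intro q hq
    have := (Finset.mem_filter.mp hq).2
    exact Prod.ext this.symm rfl
  · intro j _; rfl
  · intro q hq
    have := (Finset.mem_filter.mp hq).2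
    simp [this]

section sparse

variable {d n : ℕ} {M : ZMod p → ZMod p → ℕ} {ν : ZMod p → ℕ}

lemma mm_symm (h : Good d n M ν) (i j : ZMod p) : mm M i j = mm M j i := by
  unfold mm; rw [h.symm i j]; simp only [or_comm]

lemma mm_even (h : Good d n M ν) (i : ZMod p) : Even (mm M i i) := by
  unfold mm
  split_ifs
  · simp
  · exact h.even i

lemma mm_rows (h : Good d n M ν) (i : ZMod p) :
    ∑ j, mm M i j + nz (M 0) i = d * nz ν i := by
  unfold mm nz
  by_cases hi : i = 0
  · simp [hi]
  · simp only [hi, false_or, if_false]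
    rw [← h.rows i, sum_zero_split (M i), h.symm i 0, add_comm]

lemma M00_eq (h : Good d n M ν) : M 0 0 + ∑ j, nz (M 0) j = d * ν 0 := by
  rw [← h.rows 0, sum_zero_split (M 0)]; rfl

lemma nz_sum (h : Good d n M ν) : ν 0 + ∑ i, nz ν i = n := by
  rw [← h.tot, sum_zero_split ν]; rfl

lemma mm_half (h : Good d n M ν) :
    ∑ i, ∑ j, mm M i j = 2 * (∑ q ∈ Plt p, mm M q.1 q.2 + ∑ i, mm M i i / 2) := by
  rw [sum_split, mul_add, Finset.mul_sum, Finset.mul_sum]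
  congr 1
  · refine Finset.sum_congr rfl fun q _ => ?_
    rw [mm_symm h q.2 q.1]; ring
  · refine Finset.sum_congr rfl fun i _ => ?_
    obtain ⟨r, hr⟩ := mm_even h i
    omega

lemma ef_eq (h : Good d n M ν) :
    ∑ i, nz (M 0) i + 2 * (∑ q ∈ Plt p, mm M q.1 q.2 + ∑ i, mm M i i / 2) = d * ∑ i, nz ν i := by
  rw [← mm_half h, Finset.mul_sum, ← Finset.sum_congr rfl (fun i _ => mm_rows h i),
    Finset.sum_add_distrib, add_comm]

/-- regrouping of the weight -/
lemma wt_regroup (h : Good d n M ν) :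
    wt d n M ν = ((M 0 0).factorial : ℝ) / (2 ^ (M 0 0 / 2) * ((M 0 0 / 2).factorial : ℝ)) *
      ((n.factorial : ℝ) / (ν 0).factorial / ∏ i, ((nz ν i).factorial : ℝ)) *
      (Ncount d (ν 0) (M 0) : ℝ) *
      (∏ i, ((if i = 0 then 1 else (Ncount d (ν i) (M i) : ℝ)) *
        ((∏ j, ((mm M i j).factorial : ℝ)) * ((nz (M 0) i).factorial : ℝ)))) *
      (∏ q ∈ Plt p, (1 / ((mm M q.1 q.2).factorial : ℝ))) *
      ∏ i, (1 / (2 ^ (mm M i i / 2) * ((mm M i i / 2).factorial : ℝ))) := by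
  have e1 : ∏ i, ((ν i).factorial : ℝ) = (ν 0).factorial * ∏ i, ((nz ν i).factorial : ℝ) := by
    rw [prod_zero_split]
    congr 1
    refine Finset.prod_congr rfl fun i _ => ?_
    unfold nz; split_ifs <;> simp
  have e2 : ∏ q ∈ Plt p, ((M q.1 q.2).factorial : ℝ) = (∏ j, ((nz (M 0) j).factorial : ℝ)) *
      ∏ q ∈ Plt p, ((mm M q.1 q.2).factorial : ℝ) := by
    rw [prod_Plt_split (fun i j => ((M i j).factorial : ℝ))]
    congr 1
    · refine Finset.prod_congr rfl fun i _ => ?_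
      unfold nz; split_ifs <;> simp
    · refine Finset.prod_congr rfl fun i _ => ?_
      unfold mm; split_ifs <;> simp
  have e3 : (∏ i : ZMod p, ((M i i).factorial : ℝ) / (2 ^ (M i i / 2) * ((M i i / 2).factorial : ℝ)))
      = ((M 0 0).factorial : ℝ) / (2 ^ (M 0 0 / 2) * ((M 0 0 / 2).factorial : ℝ)) *
      ∏ i : ZMod p, (((mm M i i).factorial : ℝ) * (1 /
        (2 ^ (mm M i i / 2) * ((mm M i i / 2).factorial : ℝ)))) := by
    rw [prod_zero_split]
    congr 1
    refine Finset.prod_congr rfl fun i _ => ?_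
    unfold mm
    by_cases hi : i = 0
    · simp [hi]
    · simp only [hi, or_self, if_false]; ring
  have e4 : ∏ i : ZMod p, (Ncount d (ν i) (M i) : ℝ) = (Ncount d (ν 0) (M 0) : ℝ) *
      ∏ i, (if i = 0 then 1 else (Ncount d (ν i) (M i) : ℝ)) := prod_zero_split _
  have e5 : ∏ i, ∏ j, ((mm M i j).factorial : ℝ) =
      (∏ q ∈ Plt p, ((mm M q.1 q.2).factorial : ℝ)) * (∏ q ∈ Plt p, ((mm M q.1 q.2).factorial : ℝ)) *
        ∏ i, ((mm M i i).factorial : ℝ) := by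
    rw [prod_split, ← Finset.prod_mul_distrib]
    congr 1
    refine Finset.prod_congr rfl fun q _ => ?_
    rw [mm_symm h q.2 q.1]
  have e6 : ∏ q ∈ Plt p, (1 / ((mm M q.1 q.2).factorial : ℝ)) =
      1 / ∏ q ∈ Plt p, ((mm M q.1 q.2).factorial : ℝ) := by
    rw [Finset.prod_div_distrib, Finset.prod_const_one]
  have hne : ∏ q ∈ Plt p, ((mm M q.1 q.2).factorial : ℝ) ≠ 0 :=
    Finset.prod_ne_zero_iff.mpr fun q _ => by exact_mod_cast (Nat.factorial_pos _).ne'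
  have hS : Finset.univ.filter (fun q : ZMod p × ZMod p => q.1.val < q.2.val) = Plt p := rfl
  unfold wt
  rw [hS, e1, e2, e3, e4, e6, Finset.prod_mul_distrib, Finset.prod_mul_distrib,
    Finset.prod_mul_distrib, e5]
  generalize ∏ q ∈ Plt p, ((mm M q.1 q.2).factorial : ℝ) = A at hne ⊢
  generalize ∏ i, ((nz ν i).factorial : ℝ) = A1
  generalize ∏ i, ((nz (M 0) i).factorial : ℝ) = A2
  generalize ∏ i, ((mm M i i).factorial : ℝ) = A3
  generalize ∏ i, (1 / (2 ^ (mm M i i / 2) * ((mm M i i / 2).factorial : ℝ))) = A4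
  field_simp

lemma A1_bound (h : Good d n M ν) :
    (∏ i, ((if i = 0 then 1 else (Ncount d (ν i) (M i) : ℝ)) *
        ((∏ j, ((mm M i j).factorial : ℝ)) * ((nz (M 0) i).factorial : ℝ)))) ≤
    (d : ℝ) ^ (d * ∑ i, nz ν i) * (∏ i, (nz ν i : ℝ) ^ nz (M 0) i) *
      ((∏ q ∈ Plt p, ((nz ν q.1 : ℝ) * nz ν q.2) ^ mm M q.1 q.2) *
        ∏ i, (nz ν i : ℝ) ^ mm M i i) := by
  have h1 : ∀ i, (if i = 0 then 1 else (Ncount d (ν i) (M i) : ℝ)) *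
        ((∏ j, ((mm M i j).factorial : ℝ)) * ((nz (M 0) i).factorial : ℝ)) ≤
        ((d : ℝ) * nz ν i) ^ (d * nz ν i) := by
    intro i
    by_cases hi : i = 0
    · simp [hi, mm, nz]
    · have := row_bound2 d (ν i) (M i) (h.rows i)
      rw [prod_zero_split (fun j => ((M i j).factorial : ℝ))] at this
      simp only [hi, if_false, nz]
      refine le_trans (le_of_eq ?_) this
      congr 1
      rw [mul_comm, h.symm 0 i]
      congr 1
      refine Finset.prod_congr rfl fun j _ => ?_
      unfold mm
      by_cases hj : j = 0 <;> simp [hi, hj]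
  calc _ ≤ ∏ i, ((d : ℝ) * nz ν i) ^ (d * nz ν i) :=
        Finset.prod_le_prod (fun i _ => by split_ifs <;> positivity) fun i _ => h1 i
    _ = (d : ℝ) ^ (d * ∑ i, nz ν i) * ∏ i, ((nz ν i : ℝ) ^ nz (M 0) i *
        ∏ j, (nz ν i : ℝ) ^ mm M i j) := by
        rw [Finset.mul_sum, ← Finset.prod_pow_eq_pow_sum, ← Finset.prod_mul_distrib]
        refine Finset.prod_congr rfl fun i _ => ?_
        rw [mul_pow]
        congr 1
        rw [Finset.prod_pow_eq_pow_sum, ← pow_add, ← mm_rows h i, add_comm]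
    _ = _ := by
        rw [Finset.prod_mul_distrib, ← mul_assoc, prod_split]
        congr 2
        refine Finset.prod_congr rfl fun q _ => ?_
        rw [mm_symm h q.2 q.1, mul_pow]

lemma N0_bound (h : Good d n M ν) (s : ℕ) (hs : s = ∑ i, nz ν i) (hs0 : 0 < s) (ζ : ℝ)
    (hζ0 : 0 < ζ) (hζ1 : ζ ≤ 1) (hζn : ζ ^ 2 * n = s) :
    (Ncount d (ν 0) (M 0) : ℝ) * ∏ i, (nz ν i : ℝ) ^ nz (M 0) i ≤
      Real.exp (d ^ 2 * 2 ^ d * s) * (s / ζ) ^ (∑ i, nz (M 0) i) := by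
  have hs' : (0 : ℝ) < s := by exact_mod_cast hs0
  set z : ZMod p → ℝ := fun j => if j = 0 then 1 else ζ / s * nz ν j with hz
  have hz0 : ∀ j, 0 ≤ z j := by intro j; simp only [hz]; split_ifs <;> positivity
  have hzs : ∑ j, z j = 1 + ζ := by
    rw [sum_zero_split]
    have e : ∀ i, (if i = 0 then 0 else z i) = ζ / s * (nz ν i : ℝ) := by
      intro i
      by_cases hi : i = 0 <;> simp [hi, hz, nz]
    simp_rw [e]
    rw [← Finset.mul_sum]
    have : ∑ i, (nz ν i : ℝ) = s := by rw [hs]; push_cast; rfl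
    rw [this]
    simp [hz]
    field_simp
  have h1 := gf d (ν 0) (M 0) z hz0
  have h2 := Zs_sparse d z ζ hz0 (by simp [hz]) hzs hζ0.le hζ1
  have h3 : Zs d z ^ (ν 0) ≤ Real.exp (d ^ 2 * 2 ^ d * s) := by
    calc Zs d z ^ (ν 0) ≤ Real.exp (d ^ 2 * 2 ^ d * ζ ^ 2) ^ (ν 0) := by
          refine pow_le_pow_left₀ (Zs_nonneg _ _ hz0) (h2.trans ?_) _
          linarith [Real.add_one_le_exp ((d : ℝ) ^ 2 * 2 ^ d * ζ ^ 2)]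
      _ = Real.exp (ν 0 * (d ^ 2 * 2 ^ d * ζ ^ 2)) := by rw [← Real.exp_nat_mul]
      _ ≤ _ := by
          refine Real.exp_le_exp.mpr ?_
          have hν : (ν 0 : ℝ) ≤ n := by
            have := nz_sum h
            exact_mod_cast (by omega : ν 0 ≤ n)
          calc (ν 0 : ℝ) * (d ^ 2 * 2 ^ d * ζ ^ 2) ≤ n * (d ^ 2 * 2 ^ d * ζ ^ 2) := by gcongr
            _ = d ^ 2 * 2 ^ d * (ζ ^ 2 * n) := by ring
            _ = _ := by rw [hζn]
  have h4 : ∏ j, z j ^ M 0 j = (ζ / s) ^ (∑ i, nz (M 0) i) * ∏ i, (nz ν i : ℝ) ^ nz (M 0) i := by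
    rw [prod_zero_split, ← Finset.prod_pow_eq_pow_sum, ← Finset.prod_mul_distrib]
    have : z 0 ^ M 0 0 = 1 := by simp [hz]
    rw [this, one_mul]
    refine Finset.prod_congr rfl fun j _ => ?_
    by_cases hj : j = 0
    · simp [hj, nz]
    · simp only [hj, if_false, hz, nz, mul_pow]
  rw [h4] at h1
  have h5 := h1.trans h3
  have e : (s / ζ) ^ (∑ i, nz (M 0) i) = ((ζ / s) ^ (∑ i, nz (M 0) i))⁻¹ := by
    rw [← inv_pow, inv_div]
  rw [e, ← div_eq_mul_inv, le_div_iff₀ (by positivity)]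
  linarith
end sparse


/-- occupation numbers -/
def kap (M : ZMod p → ZMod p → ℕ) (q : ZMod p × ZMod p) : ℕ :=
  if q.1.val < q.2.val then mm M q.1 q.2 else if q.1 = q.2 then mm M q.1 q.1 / 2 else 0

/-- intensities -/
noncomputable def yy (μ : ℝ) (ν : ZMod p → ℕ) (q : ZMod p × ZMod p) : ℝ :=
  if q.1.val < q.2.val then μ * (nz ν q.1 * nz ν q.2) else
    if q.1 = q.2 then μ * (nz ν q.1 : ℝ) ^ 2 / 2 else 0

lemma kap_prod (g : ℝ → ℕ → ℝ) (hg : ∀ x, g x 0 = 1) (μ : ℝ) (M : ZMod p → ZMod p → ℕ)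
    (ν : ZMod p → ℕ) :
    ∏ q, g (yy μ ν q) (kap M q) =
      (∏ q ∈ Plt p, g (μ * (nz ν q.1 * nz ν q.2)) (mm M q.1 q.2)) *
      ∏ i, g (μ * (nz ν i : ℝ) ^ 2 / 2) (mm M i i / 2) := by
  rw [Fintype.prod_prod_type, prod_split (fun i j => g (yy μ ν (i, j)) (kap M (i, j)))]
  congr 1
  · refine Finset.prod_congr rfl fun q hq => ?_
    have hq' := (Finset.mem_filter.mp hq).2
    have h1 : ¬ q.2.val < q.1.val := by omega
    have h2 : ¬ q.2 = q.1 := by intro h; rw [h] at hq'; omega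
    simp only [kap, yy, hq', h1, h2, if_true, if_false, hg, mul_one]
  · refine Finset.prod_congr rfl fun i _ => ?_
    simp [kap, yy]

lemma yy_sum (μ : ℝ) (ν : ZMod p → ℕ) : ∑ q, yy μ ν q = μ * (∑ i, (nz ν i : ℝ)) ^ 2 / 2 := by
  have h1 : (∑ i, (nz ν i : ℝ)) ^ 2 = ∑ i, ∑ j, (nz ν i : ℝ) * nz ν j := by
    rw [sq, Finset.sum_mul_sum]
  rw [h1, sum_split, Fintype.sum_prod_type, sum_split (fun i j => yy μ ν (i, j)), mul_add, add_div,
    Finset.mul_sum, Finset.mul_sum, Finset.sum_div, Finset.sum_div]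
  congr 1
  · refine Finset.sum_congr rfl fun q hq => ?_
    have hq' := (Finset.mem_filter.mp hq).2
    have h1 : ¬ q.2.val < q.1.val := by omega
    have h2 : ¬ q.2 = q.1 := by intro h; rw [h] at hq'; omega
    simp only [yy, hq', h1, h2, if_true, if_false]
    ring
  · refine Finset.sum_congr rfl fun i _ => ?_
    simp only [yy, lt_irrefl, if_false, if_true]
    ring

lemma yy_nonneg (μ : ℝ) (hμ : 0 ≤ μ) (ν : ZMod p → ℕ) (q : ZMod p × ZMod p) : 0 ≤ yy μ ν q := by
  unfold yy
  split_ifs <;> positivity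

lemma R_bound {d n : ℕ} (hd : 0 < d) {M : ZMod p → ZMod p → ℕ} {ν : ZMod p → ℕ}
    (h : Good d n M ν) (s : ℕ) (hs : s = ∑ i, nz ν i) (hs0 : 0 < s) (hs4 : 4 * s ≤ n) (e f : ℕ)
    (he : e = ∑ i, nz (M 0) i)
    (hf : f = ∑ q ∈ Plt p, mm M q.1 q.2 + ∑ i, mm M i i / 2) :
    pre d n * (((M 0 0).factorial : ℝ) / (2 ^ (M 0 0 / 2) * ((M 0 0 / 2).factorial : ℝ))) ≤
      (1 / ((n : ℝ) * d / 2)) ^ (e + f) := by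
  have h1 := M00_eq h
  have h2 := nz_sum h
  have h3 := ef_eq h
  rw [← he] at h1
  rw [← hs] at h2
  rw [← he, ← hf, ← hs] at h3
  obtain ⟨h0, hh⟩ := h.even 0
  have hM : M 0 0 = 2 * h0 := by omega
  have hnd : n * d = 2 * (h0 + (e + f)) := by
    have : n * d = d * ν 0 + d * s := by rw [← h2]; ring
    omega
  have hx : n * d ≤ 2 * (2 * h0) := by
    have : n * d = d * ν 0 + d * s := by rw [← h2]; ring
    have : d * (4 * s) ≤ d * n := Nat.mul_le_mul_left d hs4
    have : d * n = n * d := mul_comm _ _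
    have : d * (4 * s) = 4 * (d * s) := by ring
    omega
  have hn0 : (0 : ℝ) < n := by exact_mod_cast (by omega : 0 < n)
  have hd0 : (0 : ℝ) < d := by exact_mod_cast hd
  have := ratio_bound h0 (e + f) ((n : ℝ) * d / 2) (by positivity) (by
    have hx' : (n : ℝ) * d ≤ 2 * (2 * h0) := by exact_mod_cast hx
    linarith)
  unfold pre
  rw [hnd, hM, Nat.mul_div_cancel_left _ (by norm_num), Nat.mul_div_cancel_left _ (by norm_num)]
  exact this

set_option maxHeartbeats 400000 in
lemma term_sparse {d n : ℕ} (hd : 0 < d) {M : ZMod p → ZMod p → ℕ} {ν : ZMod p → ℕ}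
    (h : Good d n M ν) (s : ℕ) (hs : s = ∑ i, nz ν i) (hs0 : 0 < s) (hs4 : 4 * s ≤ n) (ζ : ℝ)
    (hζ0 : 0 < ζ) (hζ1 : ζ ≤ 1) (hζn : ζ ^ 2 * n = s) :
    pre d n * wt d n M ν ≤
      ((n.factorial : ℝ) / (ν 0).factorial / ∏ i, ((nz ν i).factorial : ℝ)) *
      (Real.exp (d ^ 2 * 2 ^ d * s) * (2 * ζ) ^ (d * s)) *
      ∏ q, yy ((d : ℝ) / (2 * s)) ν q ^ kap M q / ((kap M q).factorial : ℝ) := by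
  obtain ⟨e, he⟩ : ∃ e, e = ∑ i, nz (M 0) i := ⟨_, rfl⟩
  obtain ⟨f, hf⟩ : ∃ f, f = ∑ q ∈ Plt p, mm M q.1 q.2 + ∑ i, mm M i i / 2 := ⟨_, rfl⟩
  have bR := R_bound hd h s hs hs0 hs4 e f he hf
  have bA := A1_bound h
  have bN := N0_bound h s hs hs0 ζ hζ0 hζ1 hζn
  have hef := ef_eq h
  rw [← he, ← hf, ← hs] at hef
  rw [← he] at bN
  rw [← hs] at bA
  have hn0 : (0 : ℝ) < n := by exact_mod_cast (by omega : 0 < n)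
  have hd0 : (0 : ℝ) < d := by exact_mod_cast hd
  have hs' : (0 : ℝ) < s := by exact_mod_cast hs0
  rw [wt_regroup h]
  set F := (n.factorial : ℝ) / (ν 0).factorial / ∏ i, ((nz ν i).factorial : ℝ) with hF
  have hF0 : 0 ≤ F := by rw [hF]; positivity
  set A := (∏ i, ((if i = 0 then 1 else (Ncount d (ν i) (M i) : ℝ)) *
        ((∏ j, ((mm M i j).factorial : ℝ)) * ((nz (M 0) i).factorial : ℝ))))
  set V := ∏ i, (nz ν i : ℝ) ^ nz (M 0) i with hV
  set W1 := ∏ q ∈ Plt p, ((nz ν q.1 : ℝ) * nz ν q.2) ^ mm M q.1 q.2 with hW1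
  set W2 := ∏ i, (nz ν i : ℝ) ^ mm M i i with hW2
  set G1 := ∏ q ∈ Plt p, (1 / ((mm M q.1 q.2).factorial : ℝ)) with hG1
  set G2 := ∏ i, (1 / (2 ^ (mm M i i / 2) * ((mm M i i / 2).factorial : ℝ))) with hG2
  have hG10 : 0 ≤ G1 := Finset.prod_nonneg fun _ _ => by positivity
  have hG20 : 0 ≤ G2 := Finset.prod_nonneg fun _ _ => by positivity
  have hW10 : 0 ≤ W1 := Finset.prod_nonneg fun _ _ => by positivity
  have hW20 : 0 ≤ W2 := Finset.prod_nonneg fun _ _ => by positivity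
  have hV0 : 0 ≤ V := Finset.prod_nonneg fun _ _ => by positivity
  set R := pre d n * (((M 0 0).factorial : ℝ) / (2 ^ (M 0 0 / 2) * ((M 0 0 / 2).factorial : ℝ)))
    with hR
  have hR0 : 0 ≤ R := by rw [hR]; unfold pre; positivity
  set N0 := (Ncount d (ν 0) (M 0) : ℝ) with hN0
  have hN00 : 0 ≤ N0 := by positivity
  set X := Real.exp ((d : ℝ) ^ 2 * 2 ^ d * s) with hX
  have hX0 : 0 < X := Real.exp_pos _
  have num : (1 / ((n : ℝ) * d / 2)) ^ (e + f) * (s / ζ) ^ e * (d : ℝ) ^ (d * s) =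
      (2 * ζ) ^ (d * s) * ((d : ℝ) / (2 * s)) ^ f := by
    rw [← hef, ← hζn]
    rw [pow_add, pow_add, pow_add, pow_mul, pow_mul]
    have e1 : (1 / ((n : ℝ) * d / 2)) * (ζ ^ 2 * n / ζ) * d = 2 * ζ := by field_simp
    have e2 : (1 / ((n : ℝ) * d / 2)) * d ^ 2 = (2 * ζ) ^ 2 * (d / (2 * (ζ ^ 2 * n))) := by
      field_simp
    calc _ = ((1 / ((n : ℝ) * d / 2)) * (ζ ^ 2 * n / ζ) * d) ^ e *
          ((1 / ((n : ℝ) * d / 2)) * d ^ 2) ^ f := by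
            simp only [mul_pow]; ring
      _ = (2 * ζ) ^ e * ((2 * ζ) ^ 2 * (d / (2 * (ζ ^ 2 * n)))) ^ f := by rw [e1, e2]
      _ = _ := by rw [mul_pow ((2 * ζ) ^ 2)]; ring
  have poi : ∏ q, yy ((d : ℝ) / (2 * s)) ν q ^ kap M q / ((kap M q).factorial : ℝ) =
      ((d : ℝ) / (2 * s)) ^ f * (W1 * W2) * (G1 * G2) := by
    rw [kap_prod (fun x m => x ^ m / (m.factorial : ℝ)) (by simp)]
    rw [hf, pow_add, ← Finset.prod_pow_eq_pow_sum, ← Finset.prod_pow_eq_pow_sum]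
    have p1 : ∏ q ∈ Plt p, (((d : ℝ) / (2 * s)) * (nz ν q.1 * nz ν q.2)) ^ mm M q.1 q.2 /
        ((mm M q.1 q.2).factorial : ℝ) =
        (∏ q ∈ Plt p, ((d : ℝ) / (2 * s)) ^ mm M q.1 q.2) * W1 * G1 := by
      rw [hW1, hG1, ← Finset.prod_mul_distrib, ← Finset.prod_mul_distrib]
      refine Finset.prod_congr rfl fun q _ => ?_
      rw [mul_pow]; ring
    have p2 : ∏ i, (((d : ℝ) / (2 * s)) * (nz ν i : ℝ) ^ 2 / 2) ^ (mm M i i / 2) /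
        ((mm M i i / 2).factorial : ℝ) =
        (∏ i, ((d : ℝ) / (2 * s)) ^ (mm M i i / 2)) * W2 * G2 := by
      rw [hW2, hG2, ← Finset.prod_mul_distrib, ← Finset.prod_mul_distrib]
      refine Finset.prod_congr rfl fun i _ => ?_
      obtain ⟨r, hr⟩ := mm_even h i
      have hr2 : mm M i i / 2 = r := by omega
      rw [hr2, hr, ← two_mul, pow_mul, div_pow, mul_pow]
      ring
    rw [p1, p2]
    ring
  rw [poi]
  have hA0 : 0 ≤ A := Finset.prod_nonneg fun i _ => by split_ifs <;> positivity
  clear_value A V W1 W2 G1 G2 N0 X F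
  have bNA : N0 * A ≤ (X * (s / ζ) ^ e) * ((d : ℝ) ^ (d * s) * (W1 * W2)) := by
    calc N0 * A ≤ N0 * ((d : ℝ) ^ (d * s) * V * (W1 * W2)) := by gcongr
      _ = (N0 * V) * ((d : ℝ) ^ (d * s) * (W1 * W2)) := by ring
      _ ≤ _ := by gcongr
  calc _ = R * F * (N0 * A) * (G1 * G2) := by rw [hR]; ring
    _ ≤ (1 / ((n : ℝ) * d / 2)) ^ (e + f) * F *
        ((X * (s / ζ) ^ e) * ((d : ℝ) ^ (d * s) * (W1 * W2))) * (G1 * G2) :=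
        mul_le_mul_of_nonneg_right (mul_le_mul (mul_le_mul_of_nonneg_right bR hF0) bNA
          (mul_nonneg hN00 hA0) (mul_nonneg (by positivity) hF0)) (mul_nonneg hG10 hG20)
    _ = F * X * ((1 / ((n : ℝ) * d / 2)) ^ (e + f) * (s / ζ) ^ e * (d : ℝ) ^ (d * s)) *
        (W1 * W2) * (G1 * G2) := by ring
    _ = _ := by rw [num]; ring


lemma kap_inj {d n : ℕ} {M M' : ZMod p → ZMod p → ℕ} {ν : ZMod p → ℕ}
    (h : Good d n M ν) (h' : Good d n M' ν) (hk : kap M = kap M') : M = M' := by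
  have lt : ∀ i j : ZMod p, i.val < j.val → mm M i j = mm M' i j := by
    intro i j hij
    have := congrFun hk (i, j)
    simpa [kap, hij] using this
  have hmm : ∀ i j, mm M i j = mm M' i j := by
    intro i j
    rcases lt_trichotomy i.val j.val with hij | hij | hij
    · exact lt i j hij
    · have hij' : i = j := ZMod.val_injective p hij
      subst hij'
      have := congrFun hk (i, i)
      simp only [kap, lt_irrefl, if_false, if_true] at this
      obtain ⟨r, hr⟩ := mm_even h i
      obtain ⟨r', hr'⟩ := mm_even h' i
      omega
    · rw [mm_symm h, mm_symm h']
      exact lt j i hij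
  have hnz : ∀ i, nz (M 0) i = nz (M' 0) i := by
    intro i
    have h1 := mm_rows h i
    have h2 := mm_rows h' i
    have h3 : ∑ j, mm M i j = ∑ j, mm M' i j := Finset.sum_congr rfl fun j _ => hmm i j
    omega
  have h00 : M 0 0 = M' 0 0 := by
    have h1 := M00_eq h
    have h2 := M00_eq h'
    have h3 : ∑ j, nz (M 0) j = ∑ j, nz (M' 0) j := Finset.sum_congr rfl fun j _ => hnz j
    omega
  have h0 : ∀ j, M 0 j = M' 0 j := by
    intro j
    by_cases hj : j = 0
    · rw [hj, h00]
    · have := hnz j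
      simpa [nz, hj] using this
  funext i j
  by_cases hi : i = 0
  · rw [hi, h0]
  · by_cases hj : j = 0
    · rw [hj, h.symm, h'.symm, h0]
    · have := hmm i j
      simpa [mm, hi, hj] using this

lemma sum_nu (n s : ℕ) (hs0 : 0 < s) (T : Finset (ZMod p → ℕ))
    (hT : ∀ ν ∈ T, ∑ i, nz ν i = s ∧ ν 0 + s = n) :
    ∑ ν ∈ T, (n.factorial : ℝ) / (ν 0).factorial / ∏ i, ((nz ν i).factorial : ℝ) ≤
      ((n : ℝ) * (p / s)) ^ s * Real.exp s := by
  have hs' : (0 : ℝ) < s := by exact_mod_cast hs0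
  have hp' : (0 : ℝ) < p := p_pos'
  have hinj : Set.InjOn (fun ν : ZMod p → ℕ => nz ν) T := by
    intro ν hν ν' hν' he
    have h1 := hT ν hν
    have h2 := hT ν' hν'
    funext i
    by_cases hi : i = 0
    · rw [hi]; omega
    · have := congrFun he i
      simpa [nz, hi] using this
  have hP := poisson T (fun ν => nz ν) hinj (fun _ => (s : ℝ) / p) (fun _ => by positivity)
  have e1 : ∑ _q : ZMod p, (s : ℝ) / p = s := by
    rw [Finset.sum_const, Finset.card_univ, ZMod.card, nsmul_eq_mul]; field_simp
  rw [e1] at hP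
  have term : ∀ ν ∈ T, (n.factorial : ℝ) / (ν 0).factorial / ∏ i, ((nz ν i).factorial : ℝ) ≤
      ((n : ℝ) * (p / s)) ^ s * ∏ i, ((s : ℝ) / p) ^ nz ν i / ((nz ν i).factorial : ℝ) := by
    intro ν hν
    obtain ⟨h1, h2⟩ := hT ν hν
    have e2 : (n.factorial : ℝ) / (ν 0).factorial ≤ (n : ℝ) ^ s := by
      have h3 : (ν 0).factorial * n.descFactorial s = n.factorial := by
        have := Nat.factorial_mul_descFactorial (show s ≤ n by omega)
        rwa [show n - s = ν 0 by omega] at this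
      have h4 : (n.descFactorial s : ℝ) ≤ (n : ℝ) ^ s := by exact_mod_cast Nat.descFactorial_le_pow n s
      have h5 : (0 : ℝ) < (ν 0).factorial := by exact_mod_cast Nat.factorial_pos _
      rw [div_le_iff₀ h5, ← h3]
      push_cast
      nlinarith
    have e3 : ∏ i, ((s : ℝ) / p) ^ nz ν i / ((nz ν i).factorial : ℝ) =
        ((s : ℝ) / p) ^ s / ∏ i, ((nz ν i).factorial : ℝ) := by
      rw [Finset.prod_div_distrib, Finset.prod_pow_eq_pow_sum, h1]
    have h6 : (0 : ℝ) < ∏ i, ((nz ν i).factorial : ℝ) :=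
      Finset.prod_pos fun i _ => by exact_mod_cast Nat.factorial_pos _
    rw [e3, ← mul_div_assoc, ← mul_pow]
    have e4 : (n : ℝ) * (p / s) * (s / p) = n := by field_simp
    rw [e4]
    gcongr
  calc _ ≤ ∑ ν ∈ T, ((n : ℝ) * (p / s)) ^ s *
        ∏ i, ((s : ℝ) / p) ^ nz ν i / ((nz ν i).factorial : ℝ) := Finset.sum_le_sum term
    _ = ((n : ℝ) * (p / s)) ^ s *
        ∑ ν ∈ T, ∏ i, ((s : ℝ) / p) ^ nz ν i / ((nz ν i).factorial : ℝ) := by rw [Finset.mul_sum]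
    _ ≤ _ := by gcongr

/-- the sparse constant -/
noncomputable def Acst (d : ℕ) : ℝ :=
  Real.exp (1 + (d : ℝ) ^ 2 * 2 ^ d + d / 4) * 2 ^ d

lemma sum_s {d n : ℕ} (hd : 2 ≤ d) (s : ℕ) (hs0 : 0 < s) (hs4 : 4 * s ≤ n)
    (T : Finset (ZMod p → ZMod p → ℕ)) (nu : (ZMod p → ZMod p → ℕ) → ZMod p → ℕ)
    (hT : ∀ M ∈ T, Good d n M (nu M) ∧ ∑ i, nz (nu M) i = s) (ζ : ℝ)
    (hζ0 : 0 < ζ) (hζ1 : ζ ≤ 1) (hζn : ζ ^ 2 * n = s) :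
    ∑ M ∈ T, pre d n * wt d n M (nu M) ≤ (Acst d * p * ζ ^ (d - 2)) ^ s := by
  classical
  have hs' : (0 : ℝ) < s := by exact_mod_cast hs0
  have hn0 : (0 : ℝ) < n := by exact_mod_cast (by omega : 0 < n)
  set c := Real.exp ((d : ℝ) ^ 2 * 2 ^ d * s) * (2 * ζ) ^ (d * s) with hc
  have hc0 : 0 < c := by positivity
  set F : (ZMod p → ℕ) → ℝ := fun ν =>
    (n.factorial : ℝ) / (ν 0).factorial / ∏ i, ((nz ν i).factorial : ℝ) with hF
  have hF0 : ∀ ν, 0 ≤ F ν := fun ν => by simp only [hF]; positivity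
  have hT' : ∀ ν ∈ T.image nu, ∑ i, nz ν i = s ∧ ν 0 + s = n := by
    intro ν hν
    obtain ⟨M, hM, rfl⟩ := Finset.mem_image.mp hν
    obtain ⟨h1, h2⟩ := hT M hM
    refine ⟨h2, ?_⟩
    rw [← h2]; exact nz_sum h1
  have inner : ∀ ν ∈ T.image nu, ∑ M ∈ T.filter (fun M => nu M = ν), pre d n * wt d n M (nu M) ≤
      F ν * (c * Real.exp (d * s / 4)) := by
    intro ν hν
    have hsum := (hT' ν hν).1
    have hP := poisson (T.filter (fun M => nu M = ν)) (fun M => kap M) (by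
      intro M hM M' hM' he
      rw [Finset.coe_filter] at hM hM'
      have h1 := (hT M hM.1).1
      have h2 := (hT M' hM'.1).1
      rw [hM.2] at h1
      rw [hM'.2] at h2
      exact kap_inj h1 h2 he) (yy ((d : ℝ) / (2 * s)) ν) (yy_nonneg _ (by positivity) ν)
    have e : ∑ q, yy ((d : ℝ) / (2 * s)) ν q = d * s / 4 := by
      rw [yy_sum]
      have : ∑ i, (nz ν i : ℝ) = s := by exact_mod_cast hsum
      rw [this]; field_simp; ring
    rw [e] at hP
    calc _ ≤ ∑ M ∈ T.filter (fun M => nu M = ν), F ν * c *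
          ∏ q, yy ((d : ℝ) / (2 * s)) ν q ^ kap M q / ((kap M q).factorial : ℝ) := by
          refine Finset.sum_le_sum fun M hM => ?_
          obtain ⟨hM1, hM2⟩ := Finset.mem_filter.mp hM
          have := term_sparse (by omega) (hT M hM1).1 s (hT M hM1).2.symm hs0 hs4 ζ hζ0 hζ1 hζn
          rw [hM2] at this ⊢
          exact this
      _ = F ν * c * ∑ M ∈ T.filter (fun M => nu M = ν),
          ∏ q, yy ((d : ℝ) / (2 * s)) ν q ^ kap M q / ((kap M q).factorial : ℝ) := by
          rw [Finset.mul_sum]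
      _ ≤ F ν * c * Real.exp (d * s / 4) :=
          mul_le_mul_of_nonneg_left hP (mul_nonneg (hF0 ν) hc0.le)
      _ = _ := by ring
  rw [← Finset.sum_fiberwise_of_maps_to (g := nu) (t := T.image nu)
    (fun M hM => Finset.mem_image_of_mem _ hM)]
  calc _ ≤ ∑ ν ∈ T.image nu, F ν * (c * Real.exp (d * s / 4)) := Finset.sum_le_sum inner
    _ = (∑ ν ∈ T.image nu, F ν) * (c * Real.exp (d * s / 4)) := by rw [Finset.sum_mul]
    _ ≤ (((n : ℝ) * (p / s)) ^ s * Real.exp s) * (c * Real.exp (d * s / 4)) := by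
        refine mul_le_mul_of_nonneg_right (sum_nu n s hs0 _ hT') (by positivity)
    _ = _ := by
        have ex : Real.exp (s : ℝ) * (Real.exp ((d : ℝ) ^ 2 * 2 ^ d * s) * Real.exp (d * s / 4)) =
            Real.exp (1 + (d : ℝ) ^ 2 * 2 ^ d + d / 4) ^ s := by
          rw [← Real.exp_add, ← Real.exp_add, ← Real.exp_nat_mul]
          congr 1; ring
        have hz : (n : ℝ) * (p / s) * (2 * ζ) ^ d = 2 ^ d * p * ζ ^ (d - 2) := by
          rw [← hζn]
          obtain ⟨m, rfl⟩ : ∃ m, d = m + 2 := ⟨d - 2, by omega⟩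
          rw [Nat.add_sub_cancel, mul_pow, pow_add ζ]
          field_simp
        calc _ = (Real.exp (s : ℝ) * (Real.exp ((d : ℝ) ^ 2 * 2 ^ d * s) * Real.exp (d * s / 4))) *
              ((n : ℝ) * (p / s) * (2 * ζ) ^ d) ^ s := by
              rw [hc, mul_pow _ ((2 * ζ) ^ d), ← pow_mul]; ring
          _ = _ := by
              rw [ex, hz, ← mul_pow]
              congr 1
              unfold Acst; ring


lemma not_one {d n : ℕ} {M : ZMod p → ZMod p → ℕ} {ν : ZMod p → ℕ} (h : Good d n M ν)
    (hpd : ¬ p ∣ d) (hrow : ∀ i, (∑ j : ZMod p, j * (M i j : ZMod p)) = 0) :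
    ∑ i, nz ν i ≠ 1 := by
  intro h1
  obtain ⟨i, hi⟩ : ∃ i, nz ν i ≠ 0 := by
    by_contra hcon
    push Not at hcon
    simp [hcon] at h1
  have hsplit := Finset.add_sum_erase univ (nz ν) (mem_univ i)
  have hi1 : nz ν i = 1 := by omega
  have hothers : ∀ j, j ≠ i → nz ν j = 0 := by
    have : ∑ j ∈ univ.erase i, nz ν j = 0 := by omega
    intro j hj
    exact (Finset.sum_eq_zero_iff.mp this) j (Finset.mem_erase.mpr ⟨hj, mem_univ j⟩)
  have hi0 : i ≠ 0 := by rintro rfl; simp [nz] at hi1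
  have hνi : ν i = 1 := by simpa [nz, hi0] using hi1
  have hz : ∀ j a, j ≠ i → j ≠ 0 → M a j = 0 := by
    intro j a hj hj0
    by_contra hne
    have := (h.M_pos (Nat.pos_of_ne_zero hne)).2
    have h2 := hothers j hj
    simp [nz, hj0] at h2
    omega
  have key : ∀ a, (M a i : ZMod p) = 0 := by
    intro a
    have := hrow a
    rw [Finset.sum_eq_single i] at this
    · exact (mul_eq_zero.mp this).resolve_left hi0
    · intro j _ hj
      by_cases hj0 : j = 0
      · simp [hj0]
      · rw [hz j a hj hj0]; simp
    · simp
  have hr := h.rows i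
  rw [hνi, mul_one] at hr
  apply hpd
  rw [← ZMod.natCast_eq_zero_iff, ← hr]
  push_cast
  refine Finset.sum_eq_zero fun j _ => ?_
  by_cases hj0 : j = 0
  · rw [hj0, h.symm]; exact key 0
  · by_cases hj : j = i
    · rw [hj]; exact key i
    · rw [hz j i hj hj0]; simp

lemma Acst_ge (d : ℕ) : 1 ≤ Acst d := by
  unfold Acst
  have h1 : 1 ≤ Real.exp (1 + (d : ℝ) ^ 2 * 2 ^ d + d / 4) := Real.one_le_exp (by positivity)
  have h2 : (1 : ℝ) ≤ 2 ^ d := one_le_pow₀ (by norm_num)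
  nlinarith

lemma regimeA (d : ℕ) (hd : 3 ≤ d) : ∃ c0 : ℝ, 0 < c0 ∧ ∃ C : ℝ, 0 < C ∧
    ∀ n : ℕ, 0 < n → ∀ (p : ℕ) [Fact p.Prime], ¬ p ∣ d →
    ∀ (T : Finset (ZMod p → ZMod p → ℕ)) (nu : (ZMod p → ZMod p → ℕ) → ZMod p → ℕ),
    (∀ M ∈ T, Good d n M (nu M) ∧ nu M 0 < n ∧
      (∀ i, (∑ j : ZMod p, j * (M i j : ZMod p)) = 0) ∧
      (p : ℝ) ^ 2 * ((n : ℝ) - nu M 0) ≤ c0 * n) →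
    ∑ M ∈ T, pre d n * wt d n M (nu M) ≤ C * (p : ℝ) ^ 2 / (n : ℝ) ^ (d - 2) := by
  set A := Acst d with hA
  have hA1 : 1 ≤ A := Acst_ge d
  have hA0 : 0 < A := by linarith
  have hsum : Summable (fun s : ℕ => (s : ℝ) ^ (d - 2) * (1 / 2 : ℝ) ^ s) :=
    summable_pow_mul_geometric_of_norm_lt_one (d - 2) (by norm_num)
  set K := ∑' s : ℕ, (s : ℝ) ^ (d - 2) * (1 / 2 : ℝ) ^ s with hK
  have hK0 : 0 ≤ K := tsum_nonneg fun s => by positivity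
  refine ⟨1 / (4 * A ^ 2), by positivity, 4 * A ^ 2 * K + 1, by positivity, ?_⟩
  intro n hn p _ hpd T nu hT
  classical
  have hn' : (0 : ℝ) < n := by exact_mod_cast hn
  have hp1 : (1 : ℝ) ≤ p := by exact_mod_cast (Fact.out : p.Prime).one_lt.le
  have hp' : (0 : ℝ) < p := by linarith
  set σ : (ZMod p → ZMod p → ℕ) → ℕ := fun M => ∑ i, nz (nu M) i with hσ
  have fib : ∀ s ∈ T.image σ, ∑ M ∈ T.filter (fun M => σ M = s), pre d n * wt d n M (nu M) ≤
      4 * A ^ 2 * (p : ℝ) ^ 2 / (n : ℝ) ^ (d - 2) * ((s : ℝ) ^ (d - 2) * (1 / 2 : ℝ) ^ s) := by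
    intro s hs
    obtain ⟨M0, hM0, hMs⟩ := Finset.mem_image.mp hs
    obtain ⟨g1, g2, g3, g4⟩ := hT M0 hM0
    have hns := nz_sum g1
    have hMs' : ∑ i, nz (nu M0) i = s := hMs
    have hne := not_one g1 hpd g3
    rw [hMs'] at hns hne
    have hs2 : 2 ≤ s := by omega
    have hs' : (0 : ℝ) < s := by exact_mod_cast (by omega : 0 < s)
    have hnr : (n : ℝ) - nu M0 0 = s := by
      have : ((nu M0 0 + s : ℕ) : ℝ) = n := by rw [hns]
      push_cast at this; linarith
    rw [hnr, div_mul_eq_mul_div, one_mul, le_div_iff₀ (by positivity)] at g4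
    -- g4 : p^2 * s * (4 A^2) ≤ n
    have hs4r : (4 : ℝ) * s ≤ n := by
      have hpA : 1 ≤ (p : ℝ) ^ 2 * A ^ 2 := by
        have := one_le_pow₀ (n := 2) hp1
        have := one_le_pow₀ (n := 2) hA1
        nlinarith
      nlinarith
    have hs4 : 4 * s ≤ n := by exact_mod_cast hs4r
    set ζ := √((s : ℝ) / n) with hζ
    have hζ0 : 0 < ζ := Real.sqrt_pos.mpr (by positivity)
    have hζ2 : ζ ^ 2 = s / n := Real.sq_sqrt (by positivity)
    have hζn : ζ ^ 2 * n = s := by rw [hζ2]; field_simp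
    have hApz : A * p * ζ ≤ 1 / 2 := by
      refine abs_le_of_sq_le_sq' ?_ (by norm_num) |>.2
      rw [mul_pow, mul_pow, hζ2]
      rw [mul_div_assoc', div_le_iff₀ hn']
      linarith
    have hAp1 : 1 ≤ A * p := by nlinarith
    have hζ1 : ζ ≤ 1 := by nlinarith
    have hsm := sum_s (p := p) (by omega : 2 ≤ d) s (by omega) hs4 (T.filter (fun M => σ M = s)) nu
      (fun M hM => by
        obtain ⟨h1, h2⟩ := Finset.mem_filter.mp hM
        exact ⟨(hT M h1).1, h2⟩) ζ hζ0 hζ1 hζn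
    refine hsm.trans ?_
    have hle : A * p * ζ ^ (d - 2) ≤ 1 / 2 := by
      refine le_trans ?_ hApz
      have : ζ ^ (d - 2) ≤ ζ := by
        calc ζ ^ (d - 2) ≤ ζ ^ 1 := pow_le_pow_of_le_one hζ0.le hζ1 (by omega)
          _ = ζ := pow_one _
      gcongr
    calc (A * p * ζ ^ (d - 2)) ^ s = (A * p * ζ ^ (d - 2)) ^ 2 * (A * p * ζ ^ (d - 2)) ^ (s - 2) := by
          rw [← pow_add]; congr 1; omega
      _ ≤ (A * p * ζ ^ (d - 2)) ^ 2 * (1 / 2) ^ (s - 2) := by gcongr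
      _ = A ^ 2 * (p : ℝ) ^ 2 * (s / n) ^ (d - 2) * (1 / 2) ^ (s - 2) := by
          rw [← hζ2, mul_pow, mul_pow, ← pow_mul, ← pow_mul, mul_comm (d - 2) 2]
      _ = _ := by
          have : ((1 : ℝ) / 2) ^ s = (1 / 2) ^ (s - 2) * (1 / 4) := by
            obtain ⟨m, rfl⟩ : ∃ m, s = m + 2 := ⟨s - 2, by omega⟩
            rw [Nat.add_sub_cancel, pow_add]; norm_num
          rw [this, div_pow]
          ring
  rw [← Finset.sum_fiberwise_of_maps_to (g := σ) (t := T.image σ)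
    (fun M hM => Finset.mem_image_of_mem _ hM)]
  calc _ ≤ ∑ s ∈ T.image σ, 4 * A ^ 2 * (p : ℝ) ^ 2 / (n : ℝ) ^ (d - 2) *
        ((s : ℝ) ^ (d - 2) * (1 / 2 : ℝ) ^ s) := Finset.sum_le_sum fib
    _ = 4 * A ^ 2 * (p : ℝ) ^ 2 / (n : ℝ) ^ (d - 2) *
        ∑ s ∈ T.image σ, ((s : ℝ) ^ (d - 2) * (1 / 2 : ℝ) ^ s) := by rw [Finset.mul_sum]
    _ ≤ 4 * A ^ 2 * (p : ℝ) ^ 2 / (n : ℝ) ^ (d - 2) * K := by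
        have : ∑ s ∈ T.image σ, ((s : ℝ) ^ (d - 2) * (1 / 2 : ℝ) ^ s) ≤ K :=
          hsum.sum_le_tsum _ fun s _ => by positivity
        gcongr
    _ = (4 * A ^ 2 * K) * (p : ℝ) ^ 2 / (n : ℝ) ^ (d - 2) := by ring
    _ ≤ _ := by gcongr; linarith

end LDP

/-- Large deviation estimate (undirected case): for `d ≥ 3` there is `𝔟₀ > 0` so that for
every `𝔟 ≥ 𝔟₀` there are `C, c, N > 0` such that for all `n ≥ N` with `nd` even and
primes `p` with `gcd(p,d) = 1` and `p ≤ c n^{(d-2)/(5d-6)}`, the normalized sum over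
non-equidistributed symmetric matrices `M ∈ 𝒩_𝔟` of the matching/walk weights is at
most `C p^{2d}/n^{d-2}`. -/
theorem undirected_ldp_estimate (d : ℕ) (hd : 3 ≤ d) :
    ∃ b₀ : ℝ, 0 < b₀ ∧ ∀ b : ℝ, b₀ ≤ b →
      ∃ C c : ℝ, ∃ N : ℕ, 0 < C ∧ 0 < c ∧ 0 < N ∧
        ∀ n : ℕ, N ≤ n → Even (n * d) → ∀ (p : ℕ) [Fact p.Prime], Nat.gcd p d = 1 →
          (p : ℝ) ≤ c * (n : ℝ) ^ (((d : ℝ) - 2) / (5 * (d : ℝ) - 6)) →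
          ((2 : ℝ) ^ (n * d / 2) * ((n * d / 2).factorial : ℝ) / ((n * d).factorial : ℝ)) *
            (∑ᶠ M ∈ {M : ZMod p → ZMod p → ℕ |
                (∀ i j, M i j = M j i) ∧ (∀ i, Even (M i i)) ∧
                (∑ i : ZMod p, ∑ j : ZMod p, M i j) = d * n ∧
                (∀ i, d ∣ ∑ j, M i j) ∧
                (∑ j : ZMod p, M 0 j) / d < n ∧
                (∀ i, (∑ j : ZMod p, j * (M i j : ZMod p)) = 0) ∧
                b * Real.log n / n < (∑ i : ZMod p, ∑ j : ZMod p,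
                  ((M i j : ℝ) / (d * n) - 1 / (p : ℝ) ^ 2) ^ 2)},
              ((n.factorial : ℝ) / ∏ i : ZMod p, (((∑ j, M i j) / d).factorial : ℝ)) *
              (∏ q ∈ Finset.univ.filter (fun q : ZMod p × ZMod p => q.1.val < q.2.val),
                  ((M q.1 q.2).factorial : ℝ)) *
              (∏ i : ZMod p,
                  ((M i i).factorial : ℝ) /
                    (2 ^ (M i i / 2) * ((M i i / 2).factorial : ℝ))) *
              (∏ i : ZMod p,
                ((Finset.univ.filter (fun a : Fin ((∑ j, M i j) / d) → Fin d → ZMod p =>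
                  (∀ k, ∑ r, a k r = 0) ∧
                  (∀ j : ZMod p, (∑ k, Phi (a k) j) = M i j))).card : ℝ)))
          ≤ C * (p : ℝ) ^ (2 * d) / (n : ℝ) ^ (d - 2) := by
  obtain ⟨k, rfl⟩ : ∃ k, d = k + 3 := ⟨d - 3, by omega⟩
  obtain ⟨c0, hc0, CA, hCA, hA⟩ := LDP.regimeA (k + 3) hd
  obtain ⟨b0, hb0, hB⟩ := LDP.regimeB k c0 hc0
  refine ⟨b0, hb0, fun b hb => ?_⟩
  obtain ⟨N, hN, hB⟩ := hB b hb
  refine ⟨CA + 1, 1, N, by linarith, one_pos, hN, ?_⟩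
  intro n hn hev p _ hgcd hp
  have hpp : p.Prime := Fact.out
  have hn0 : 0 < n := lt_of_lt_of_le hN hn
  have hn1 : (1 : ℝ) ≤ n := by exact_mod_cast hn0
  have hpd : ¬ p ∣ k + 3 := fun h => by
    have := Nat.gcd_eq_left h
    rw [hgcd] at this
    exact hpp.one_lt.ne this
  have hp5 : (p : ℝ) ≤ (n : ℝ) ^ ((1 : ℝ) / 5) := by
    rw [one_mul] at hp
    refine hp.trans (Real.rpow_le_rpow_of_exponent_le hn1 ?_)
    have hk : (0 : ℝ) ≤ k := Nat.cast_nonneg k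
    push_cast
    rw [div_le_div_iff₀ (by linarith) (by norm_num)]
    linarith
  set S : Set (ZMod p → ZMod p → ℕ) := {M | _} with hS
  let nu : (ZMod p → ZMod p → ℕ) → ZMod p → ℕ := fun M i => (∑ j, M i j) / (k + 3)
  have hgood : ∀ M ∈ S, LDP.Good (k + 3) n M (nu M) := by
    intro M hM
    obtain ⟨h1, h2, h3, h4, -⟩ := hM
    have hr : ∀ i, ∑ j, M i j = (k + 3) * nu M i := fun i => (Nat.mul_div_cancel' (h4 i)).symm
    refine ⟨h1, h2, hr, ?_⟩
    rw [Finset.sum_congr rfl (fun i _ => hr i), ← Finset.mul_sum] at h3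
    exact Nat.eq_of_mul_eq_mul_left (by omega) h3
  have hfin : S.Finite := by
    refine Set.Finite.subset (Finset.finite_toSet (Fintype.piFinset fun _ : ZMod p =>
      Fintype.piFinset fun _ : ZMod p => Finset.range ((k + 3) * n + 1))) ?_
    intro M hM
    simp only [Finset.mem_coe, Fintype.mem_piFinset, Finset.mem_range]
    intro i j
    have := (hgood M hM).le i j
    omega
  rw [finsum_mem_eq_finite_toFinset_sum _ hfin, Finset.mul_sum]
  change ∑ M ∈ hfin.toFinset, LDP.pre (k + 3) n * LDP.wt (k + 3) n M (nu M) ≤ _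
  classical
  rw [← Finset.sum_filter_add_sum_filter_not hfin.toFinset
    (fun M => (p : ℝ) ^ 2 * ((n : ℝ) - nu M 0) ≤ c0 * n)]
  have hA' := hA n hn0 p hpd (hfin.toFinset.filter
    (fun M => (p : ℝ) ^ 2 * ((n : ℝ) - nu M 0) ≤ c0 * n)) nu (by
      intro M hM
      rw [Finset.mem_filter, Set.Finite.mem_toFinset] at hM
      obtain ⟨hM, h⟩ := hM
      exact ⟨hgood M hM, hM.2.2.2.2.1, hM.2.2.2.2.2.1, h⟩)
  have hB' := hB n hn hev p hpd hp5 (hfin.toFinset.filter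
    (fun M => ¬ (p : ℝ) ^ 2 * ((n : ℝ) - nu M 0) ≤ c0 * n)) nu (by
      intro M hM
      rw [Finset.mem_filter, Set.Finite.mem_toFinset] at hM
      obtain ⟨hM, h⟩ := hM
      exact ⟨hgood M hM, not_le.mp h, hM.2.2.2.2.2.2⟩)
  refine (add_le_add hA' hB').trans ?_
  have e : k + 3 - 2 = k + 1 := by omega
  rw [e, ← add_div]
  have hp1 : (1 : ℝ) ≤ p := by exact_mod_cast hpp.one_lt.le
  have h2 : (p : ℝ) ^ 2 ≤ (p : ℝ) ^ (2 * (k + 3)) := pow_le_pow_right₀ hp1 (by omega)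
  have h3 : (1 : ℝ) ≤ (p : ℝ) ^ (2 * (k + 3)) := one_le_pow₀ hp1
  gcongr
  nlinarith
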